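/- arXiv:2605.17136 — 6 statements merged into one kernel-verified Lean document; each statement's English description precedes it below -/
import Mathlib

section
/- Let n ≥ 3. There exist ε₀ > 0 and K > 0 (depending only on n) such that the following holds for every p and every 0 ≤ ε < ε₀: if f_1,…,f_n : [n]^p → [n] are an ε-approximate polymorphism of Perm_n with respect to the uniform distribution, then one of the following cases holds: (i) there exist k ∈ [p] and a permutation π of [n] such that for all i ∈ [n], Pr_{x uniform on [n]^p}[f_i(x) ≠ π(x_k)] ≤ K·ε^{1/4}; or (ii) for each j ∈ [n] there exists i ∈ [n] such that Pr_{x uniform on [n]^p}[f_i(x) ≠ j] ≤ K·ε^{1/4}. -/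
/-- Probability of an event under the uniform distribution on a finite type. -/
noncomputable def unifPr {α : Type*} [Fintype α] (P : α → Prop) : ℝ :=
  (Nat.card {a : α // P a} : ℝ) / Fintype.card α

/-!
For a fixed output value `j`, the number of `i` with `f i = j` is one with high probability on a
tuple of uniform permutations. Distinct entries of a uniform permutation have correlation
`-1 / (n - 1)`, so in the Efron–Stein expansion of the second moment of this number the components
on at least two coordinates contribute at least `1 - 1 / (n - 1)` times their total weight, a
positive fraction as `n ≥ 3`; hence each indicator of `f i = j` has small weight on these levels.
Comparing the four corners of a rectangle shows that, for a Boolean function of small high-level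
weight, each set of coordinates or its complement has small influence, and hence that the function
is close to a function of a single coordinate.

Replacing each event `f i x = j` by such a single-coordinate event involves at most `n ^ 2`
coordinates in total. Each choice of permutations on them has probability bounded below
independently of the arity, so if the total error is smaller than that, the single-coordinate
events form an exact polymorphism. In an exact one, either every output value is attained by a
constant function or all events are governed by one coordinate and one permutation.
-/

namespace PermPolymorphism

open Finset
open scoped BigOperators

section Probability

variable {X Y : Type*} [Fintype X]

lemma unifPr_eq_expect (P : X → Prop) [DecidablePred P] :
    unifPr P = 𝔼 x, if P x then (1 : ℝ) else 0 := by
  rw [unifPr, Fintype.expect_eq_sum_div_card, sum_boole, Nat.card_eq_fintype_card,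
    Fintype.card_subtype]

lemma unifPr_mono {P Q : X → Prop} (h : ∀ x, P x → Q x) : unifPr P ≤ unifPr Q := by
  unfold unifPr
  gcongr
  exact Nat.card_le_card_of_injective _ (Subtype.map_injective h Function.injective_id)

lemma unifPr_le_one (P : X → Prop) : unifPr P ≤ 1 := by
  classical
  rw [unifPr_eq_expect, Fintype.expect_eq_sum_div_card]
  refine div_le_one_of_le₀ ?_ (by positivity)
  rw [sum_boole]
  exact_mod_cast card_le_univ _

lemma unifPr_not [Nonempty X] (P : X → Prop) : unifPr (fun x ↦ ¬ P x) = 1 - unifPr P := by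
  classical
  have h (x : X) : (if ¬ P x then (1 : ℝ) else 0) = 1 - if P x then 1 else 0 := by
    split_ifs <;> simp_all
  simp_rw [unifPr_eq_expect, h, expect_sub_distrib, Fintype.expect_const]

lemma unifPr_or_le (P Q : X → Prop) : unifPr (fun x ↦ P x ∨ Q x) ≤ unifPr P + unifPr Q := by
  classical
  simp_rw [unifPr_eq_expect, ← expect_add_distrib]
  refine expect_le_expect fun x _ ↦ ?_
  by_cases hP : P x <;> by_cases hQ : Q x <;> simp [hP, hQ]

lemma unifPr_exists_le [Fintype Y] (P : Y → X → Prop) :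
    unifPr (fun x ↦ ∃ y, P y x) ≤ ∑ y, unifPr (P y) := by
  classical
  simp_rw [unifPr_eq_expect, ← expect_sum_comm]
  refine expect_le_expect fun x _ ↦ ?_
  have h_nonneg : ∀ y ∈ univ, (0 : ℝ) ≤ if P y x then 1 else 0 := fun y _ ↦ by positivity
  split_ifs with h
  · obtain ⟨y, hy⟩ := h
    simpa [hy] using single_le_sum h_nonneg (mem_univ y)
  · exact sum_nonneg h_nonneg

end Probability

section Product

variable {ι : Type*} [Fintype ι] [DecidableEq ι] {π : ι → Type*} [∀ i, Fintype (π i)]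

lemma expect_prod_apply (g : ∀ i, π i → ℝ) :
    𝔼 x : ∀ i, π i, ∏ i, g i (x i) = ∏ i, 𝔼 a, g i a := by
  simp_rw [Fintype.expect_eq_sum_div_card, prod_div_distrib, Fintype.card_pi,
    ← Fintype.piFinset_univ, prod_univ_sum, Nat.cast_prod]

lemma expect_prod_apply_of_mem [∀ i, Nonempty (π i)] (T : Finset ι) (g : ∀ i, π i → ℝ) :
    𝔼 x : ∀ i, π i, ∏ i ∈ T, g i (x i) = ∏ i ∈ T, 𝔼 a, g i a := by
  have h (i : ι) : 𝔼 a, (if i ∈ T then g i a else 1) = if i ∈ T then 𝔼 a, g i a else 1 := by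
    split_ifs <;> simp
  simpa [h] using expect_prod_apply fun i a ↦ if i ∈ T then g i a else 1

lemma unifPr_forall_mem_eq [∀ i, Nonempty (π i)] (T : Finset ι) (z : ∀ i, π i) :
    unifPr (fun x : ∀ i, π i ↦ ∀ i ∈ T, x i = z i) = ∏ i ∈ T, (1 / Fintype.card (π i) : ℝ) := by
  classical
  calc unifPr (fun x : ∀ i, π i ↦ ∀ i ∈ T, x i = z i)
    _ = 𝔼 x : ∀ i, π i, ∏ i ∈ T, if x i = z i then (1 : ℝ) else 0 := by
        simp_rw [prod_boole, unifPr_eq_expect]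
        congr!
    _ = ∏ i ∈ T, (1 / Fintype.card (π i) : ℝ) := by
        rw [expect_prod_apply_of_mem T fun i a ↦ if a = z i then (1 : ℝ) else 0]
        simp

lemma expect_expect_piecewise (T : Finset ι) (F : (∀ i, π i) → (∀ i, π i) → ℝ) :
    𝔼 x, 𝔼 y, F (T.piecewise x y) (T.piecewise y x) = 𝔼 x, 𝔼 y, F x y := by
  simp_rw [← expect_product', univ_product_univ]
  have h_invol : Function.Involutive fun q : (∀ i, π i) × (∀ i, π i) ↦
      (T.piecewise q.1 q.2, T.piecewise q.2 q.1) := fun q ↦ by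
    ext i <;> by_cases hi : i ∈ T <;> simp [hi]
  exact Fintype.expect_bijective _ h_invol.bijective _ _ fun _ ↦ rfl

lemma expect_expect_apply_piecewise [∀ i, Nonempty (π i)] (T : Finset ι)
    (φ : (∀ i, π i) → ℝ) : 𝔼 x, 𝔼 y, φ (T.piecewise x y) = 𝔼 x, φ x := by
  simpa using expect_expect_piecewise T fun x _ ↦ φ x

lemma expect_comp_eq_sum {Z Y : Type*} [Fintype Z] [Fintype Y]
    (c : Z → Y) (Φ : (ι → Y) → ℝ) :
    𝔼 z : ι → Z, Φ (fun k ↦ c (z k)) =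
      ∑ y : ι → Y, (∏ k, unifPr fun z ↦ c z = y k) * Φ y := by
  classical
  simp_rw [unifPr_eq_expect, ← expect_prod_apply fun _ z ↦ if c z = _ then (1 : ℝ) else 0]
  simp_rw [expect_mul, ← expect_sum_comm, prod_boole, mem_univ, true_imp_iff, ← funext_iff]
  simp

end Product

section EfronStein

variable {ι α : Type*} [Fintype ι] [DecidableEq ι] [Fintype α]

/-- The conditional expectation of `φ` given the coordinates in `S`. -/
noncomputable def condAvg (S : Finset ι) (φ : (ι → α) → ℝ) (x : ι → α) : ℝ :=
  𝔼 z, φ (S.piecewise x z)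

lemma expect_mul_condAvg [Nonempty α] (S : Finset ι) (φ ψ : (ι → α) → ℝ) :
    𝔼 x, φ x * condAvg S ψ x = 𝔼 x, condAvg S φ x * condAvg S ψ x := by
  have h_idem (x y : ι → α) : condAvg S ψ (S.piecewise x y) = condAvg S ψ x := by
    simp only [condAvg, piecewise_piecewise_of_subset_left (Subset.refl S)]
  rw [← expect_expect_apply_piecewise S]
  simp_rw [h_idem, ← expect_mul]
  rfl

variable [DecidableEq α]

/-- The reproducing kernel of the mean-zero functions on `α` under the uniform distribution. -/
noncomputable def centeredKernel (a b : α) : ℝ := (if a = b then (Fintype.card α : ℝ) else 0) - 1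

lemma one_add_centeredKernel (a b : α) :
    1 + centeredKernel a b = if a = b then (Fintype.card α : ℝ) else 0 := by
  unfold centeredKernel
  ring

lemma expect_one_add_centeredKernel [Nonempty α] (a : α) : 𝔼 b, (1 + centeredKernel a b) = 1 := by
  rw [Fintype.expect_eq_sum_div_card]
  simp [one_add_centeredKernel]

lemma expect_centeredKernel_mul [Nonempty α] (a b : α) :
    𝔼 c, centeredKernel c a * centeredKernel c b = centeredKernel a b := by
  have h_expand (c : α) : centeredKernel c a * centeredKernel c b =
      (if c = a then (Fintype.card α : ℝ) else 0) * centeredKernel a b -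
        ((1 + centeredKernel b c) - 1) := by
    unfold centeredKernel
    by_cases hca : c = a
    · subst hca
      simp only [if_true, @eq_comm _ b]
      ring
    · simp only [hca, if_false, @eq_comm _ b]
      ring
  simp_rw [h_expand, expect_sub_distrib, expect_one_add_centeredKernel, ← expect_mul]
  rw [Fintype.expect_eq_sum_div_card]
  simp

/-- The component `φ^{=T}` of the Efron–Stein decomposition of `φ`: its part which depends exactly
on the coordinates in `T`. -/
noncomputable def efronStein (T : Finset ι) (φ : (ι → α) → ℝ) (x : ι → α) : ℝ :=
  𝔼 y : ι → α, (∏ k ∈ T, centeredKernel (x k) (y k)) * φ y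

lemma efronStein_empty (φ : (ι → α) → ℝ) (x : ι → α) : efronStein ∅ φ x = 𝔼 y, φ y := by
  simp [efronStein]

lemma expect_mul_efronStein [Nonempty α] (T : Finset ι) (φ ψ : (ι → α) → ℝ) :
    𝔼 x, φ x * efronStein T ψ x = 𝔼 x, efronStein T φ x * efronStein T ψ x := by
  have h_kernel (y w : ι → α) : 𝔼 x : ι → α, (∏ k ∈ T, centeredKernel (x k) (y k)) *
      ∏ k ∈ T, centeredKernel (x k) (w k) = ∏ k ∈ T, centeredKernel (y k) (w k) := by
    simp_rw [← prod_mul_distrib]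
    rw [expect_prod_apply_of_mem T fun k a ↦ centeredKernel a (y k) * centeredKernel a (w k)]
    simp_rw [expect_centeredKernel_mul]
  calc 𝔼 x, φ x * efronStein T ψ x
    _ = 𝔼 y, 𝔼 w, (𝔼 x : ι → α, (∏ k ∈ T, centeredKernel (x k) (y k)) *
          ∏ k ∈ T, centeredKernel (x k) (w k)) * (φ y * ψ w) := by
        simp_rw [h_kernel, efronStein, mul_expect]
        simp only [mul_left_comm]
    _ = 𝔼 y, 𝔼 x : ι → α, 𝔼 w, (∏ k ∈ T, centeredKernel (x k) (y k)) * φ y *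
          ((∏ k ∈ T, centeredKernel (x k) (w k)) * ψ w) := by
        refine expect_congr rfl fun y _ ↦ ?_
        simp_rw [expect_mul]
        rw [expect_comm]
        simp only [mul_mul_mul_comm]
    _ = 𝔼 x, efronStein T φ x * efronStein T ψ x := by
        rw [expect_comm]
        simp_rw [efronStein, expect_mul_expect]

lemma condAvg_eq_sum_efronStein [Nonempty α] (S : Finset ι) (φ : (ι → α) → ℝ) (x : ι → α) :
    condAvg S φ x = ∑ T ∈ S.powerset, efronStein T φ x := by
  symm
  calc ∑ T ∈ S.powerset, efronStein T φ x
    _ = 𝔼 y : ι → α, (∏ k ∈ S, (1 + centeredKernel (x k) (y k))) * φ y := by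
        simp_rw [efronStein, ← expect_sum_comm, ← sum_mul, ← prod_one_add]
    _ = 𝔼 y : ι → α, 𝔼 z, (∏ k ∈ S, (1 + centeredKernel (x k) (y k))) * φ (S.piecewise y z) := by
        rw [← expect_expect_apply_piecewise S]
        refine expect_congr rfl fun y _ ↦ expect_congr rfl fun z _ ↦ ?_
        congr 1
        exact prod_congr rfl fun k hk ↦ by simp [hk]
    _ = 𝔼 y : ι → α, (∏ k ∈ S, (1 + centeredKernel (x k) (y k))) * condAvg S φ x := by
        refine expect_congr rfl fun y _ ↦ ?_
        by_cases h : ∀ k ∈ S, x k = y k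
        · rw [condAvg]
          have h_eq (z : ι → α) : S.piecewise y z = S.piecewise x z :=
            S.piecewise_congr (fun k hk ↦ (h k hk).symm) fun _ _ ↦ rfl
          simp_rw [h_eq, ← mul_expect]
        · push Not at h
          obtain ⟨k, hk, hne⟩ := h
          rw [prod_eq_zero hk (by rw [one_add_centeredKernel, if_neg hne])]
          simp only [zero_mul, expect_const_zero]
    _ = condAvg S φ x := by
        rw [← expect_mul, expect_prod_apply_of_mem S fun k a ↦ 1 + centeredKernel (x k) a]
        simp_rw [expect_one_add_centeredKernel, prod_const_one, one_mul]

lemma expect_condAvg_sq [Nonempty α] (S : Finset ι) (φ : (ι → α) → ℝ) :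
    𝔼 x, condAvg S φ x ^ 2 = ∑ T ∈ S.powerset, 𝔼 x, efronStein T φ x ^ 2 := by
  simp_rw [sq, ← expect_mul_condAvg, ← expect_mul_efronStein, condAvg_eq_sum_efronStein, mul_sum,
    expect_sum_comm]

/-- The Efron–Stein weight of `φ` on the levels at least two; it vanishes exactly when `φ` is a sum
of functions of single coordinates. -/
noncomputable def highWeight (φ : (ι → α) → ℝ) : ℝ := ∑ T with 2 ≤ #T, 𝔼 x, efronStein T φ x ^ 2

lemma highWeight_nonneg (φ : (ι → α) → ℝ) : 0 ≤ highWeight φ :=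
  sum_nonneg fun _ _ ↦ expect_nonneg fun _ _ ↦ sq_nonneg _

lemma expect_sq_sub_condAvg_sq_le_highWeight [Nonempty α] (S : Finset ι) (φ : (ι → α) → ℝ) :
    𝔼 x, φ x ^ 2 - 𝔼 x, condAvg S φ x ^ 2 - 𝔼 x, condAvg Sᶜ φ x ^ 2 + (𝔼 x, φ x) ^ 2 ≤
      highWeight φ := by
  set W : Finset ι → ℝ := fun T ↦ 𝔼 x, efronStein T φ x ^ 2 with hW
  have h_nonneg (T : Finset ι) : 0 ≤ W T := expect_nonneg fun _ _ ↦ sq_nonneg _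
  have h_univ : 𝔼 x, φ x ^ 2 = ∑ T, W T := by
    simpa [condAvg] using expect_condAvg_sq univ φ
  have h_empty : (𝔼 x, φ x) ^ 2 = ∑ T, if T = ∅ then W T else 0 := by
    simp [hW, efronStein_empty]
  have h_powerset (S : Finset ι) : 𝔼 x, condAvg S φ x ^ 2 = ∑ T, if T ⊆ S then W T else 0 := by
    rw [expect_condAvg_sq, ← sum_filter]
    congr 1
    ext T
    simp
  rw [h_univ, h_empty, h_powerset, h_powerset, highWeight, sum_filter, ← sum_sub_distrib,
    ← sum_sub_distrib, ← sum_add_distrib]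
  refine sum_le_sum fun T _ ↦ ?_
  have h_disjoint (hS : T ⊆ S) (hSc : T ⊆ Sᶜ) : T = ∅ := by
    simpa using subset_inter hS hSc
  have h_singleton (hT : #T = 1) : T ⊆ S ∨ T ⊆ Sᶜ := by
    obtain ⟨k, rfl⟩ := card_eq_one.mp hT
    simpa using em (k ∈ S)
  have := h_nonneg T
  have := card_eq_zero (s := T)
  split_ifs <;> first | linarith | (exfalso; grind)

end EfronStein

section Rectangle

lemma sq_sub_mul_sq_sub_le_of_boolean {X Y : Type*} {h : X → Y → ℝ}
    (hh : ∀ x y, h x y = 0 ∨ h x y = 1) (x x' y : X) (w z z' : Y) :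
    (h x w - h x' w) ^ 2 * (h y z - h y z') ^ 2 ≤ (h x z - h x' z - h x w + h x' w) ^ 2 +
      (h x z - h y z - h x z' + h y z') ^ 2 + (h x z - h x' z - h x z' + h x' z') ^ 2 := by
  -- If the left side is nonzero and the first two terms on the right vanish, then `h x' z` and
  -- `h x z'` equal `1 - h x z`, so the third one is `(h x z - 2 (1 - h x z) + h x' z') ^ 2 ≠ 0`.
  rcases hh x w with h₁ | h₁ <;> rcases hh x' w with h₂ | h₂ <;> rcases hh y z with h₃ | h₃ <;>
  rcases hh y z' with h₄ | h₄ <;> rcases hh x z with h₅ | h₅ <;> rcases hh x' z with h₆ | h₆ <;>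
  rcases hh x z' with h₇ | h₇ <;> rcases hh x' z' with h₈ | h₈ <;>
  norm_num [h₁, h₂, h₃, h₄, h₅, h₆, h₇, h₈]

variable {X Y : Type*} [Fintype X] [Fintype Y]

lemma expect_expect_sq_sub [Nonempty X] (g : X → ℝ) :
    𝔼 x, 𝔼 x', (g x - g x') ^ 2 = 2 * 𝔼 x, g x ^ 2 - 2 * (𝔼 x, g x) ^ 2 := by
  simp_rw [sub_sq, expect_add_distrib, expect_sub_distrib, ← mul_expect, Fintype.expect_const,
    ← expect_mul, ← mul_expect]
  ring

lemma expect_sq_mixedDifference [Nonempty X] [Nonempty Y] (h : X → Y → ℝ) :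
    𝔼 x, 𝔼 x', 𝔼 y, 𝔼 y', (h x y - h x' y - h x y' + h x' y') ^ 2 =
      4 * (𝔼 x, 𝔼 y, h x y ^ 2 - 𝔼 x, (𝔼 y, h x y) ^ 2 - 𝔼 y, (𝔼 x, h x y) ^ 2 +
        (𝔼 x, 𝔼 y, h x y) ^ 2) := by
  have h_inner (x x' : X) : 𝔼 y, 𝔼 y', (h x y - h x' y - h x y' + h x' y') ^ 2 =
      2 * 𝔼 y, (h x y - h x' y) ^ 2 - 2 * (𝔼 y, h x y - 𝔼 y, h x' y) ^ 2 := by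
    rw [← expect_sub_distrib, ← expect_expect_sq_sub]
    exact expect_congr rfl fun y _ ↦ expect_congr rfl fun y' _ ↦ by ring
  have h_swap : 𝔼 x, 𝔼 x', 𝔼 y, (h x y - h x' y) ^ 2 = 𝔼 y, 𝔼 x, 𝔼 x', (h x y - h x' y) ^ 2 := by
    rw [expect_comm (s := (univ : Finset Y))]
    exact expect_congr rfl fun x _ ↦ expect_comm _ _ _
  simp_rw [h_inner, expect_sub_distrib, ← mul_expect, h_swap, expect_expect_sq_sub,
    expect_sub_distrib, ← mul_expect, expect_comm (univ : Finset Y) univ]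
  ring

lemma expect_sq_sub_mul_expect_sq_sub_le_of_boolean [Nonempty X] [Nonempty Y] {h : X → Y → ℝ}
    (hh : ∀ x y, h x y = 0 ∨ h x y = 1) :
    (𝔼 x, 𝔼 x', 𝔼 y, (h x y - h x' y) ^ 2) * (𝔼 x, 𝔼 y, 𝔼 y', (h x y - h x y') ^ 2) ≤
      3 * 𝔼 x, 𝔼 x', 𝔼 y, 𝔼 y', (h x y - h x' y - h x y' + h x' y') ^ 2 := by
  set M : ℝ := 𝔼 x, 𝔼 x', 𝔼 y, 𝔼 y', (h x y - h x' y - h x y' + h x' y') ^ 2 with hM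
  have h_swap : 𝔼 x, 𝔼 x', 𝔼 w, 𝔼 z, (h x z - h x' z - h x w + h x' w) ^ 2 = M :=
    expect_congr rfl fun x _ ↦ expect_congr rfl fun x' _ ↦ expect_comm _ _ _
  calc (𝔼 x, 𝔼 x', 𝔼 y, (h x y - h x' y) ^ 2) * (𝔼 x, 𝔼 y, 𝔼 y', (h x y - h x y') ^ 2)
    _ = 𝔼 x, 𝔼 x', 𝔼 w, 𝔼 y, 𝔼 z, 𝔼 z', (h x w - h x' w) ^ 2 * (h y z - h y z') ^ 2 := by
        simp_rw [← mul_expect, ← expect_mul]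
    _ ≤ 𝔼 x, 𝔼 x', 𝔼 w, 𝔼 y, 𝔼 z, 𝔼 z', ((h x z - h x' z - h x w + h x' w) ^ 2 +
          (h x z - h y z - h x z' + h y z') ^ 2 + (h x z - h x' z - h x z' + h x' z') ^ 2) := by
        gcongr
        exact sq_sub_mul_sq_sub_le_of_boolean hh ..
    _ = 3 * M := by
        simp_rw [expect_add_distrib, Fintype.expect_const, h_swap, ← hM]
        ring

end Rectangle

section Influence

variable {ι α : Type*} [Fintype ι] [DecidableEq ι] [Fintype α]

/-- The influence of the set `S` of coordinates on `φ`: the mean squared change of `φ` when the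
coordinates in `S` are resampled. -/
noncomputable def influence (S : Finset ι) (φ : (ι → α) → ℝ) : ℝ :=
  𝔼 x, 𝔼 y, (φ x - φ (S.piecewise y x)) ^ 2

lemma influence_empty (φ : (ι → α) → ℝ) : influence ∅ φ = 0 := by
  simp [influence]

lemma influence_eq_expect_sq_sub [Nonempty α] (S : Finset ι) (φ : (ι → α) → ℝ) :
    influence S φ = 𝔼 x, 𝔼 x', 𝔼 z, (φ (S.piecewise x z) - φ (S.piecewise x' z)) ^ 2 := by
  rw [influence, ← expect_expect_apply_piecewise S]
  refine expect_congr rfl fun x _ ↦ ?_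
  rw [expect_comm]
  simp

lemma influence_mul_influence_compl_le [Nonempty α] [DecidableEq α] (S : Finset ι)
    {φ : (ι → α) → ℝ} (hφ : ∀ x, φ x = 0 ∨ φ x = 1) :
    influence S φ * influence Sᶜ φ ≤ 12 * highWeight φ := by
  have h_compl : influence Sᶜ φ =
      𝔼 x, 𝔼 z, 𝔼 z', (φ (S.piecewise x z) - φ (S.piecewise x z')) ^ 2 := by
    simp_rw [influence_eq_expect_sq_sub, piecewise_compl]
    exact (expect_congr rfl fun z _ ↦ expect_comm _ _ _).trans (expect_comm _ _ _)
  have h_rect := expect_sq_sub_mul_expect_sq_sub_le_of_boolean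
    fun x z : ι → α ↦ hφ (S.piecewise x z)
  rw [expect_sq_mixedDifference, expect_expect_apply_piecewise S φ,
    expect_expect_apply_piecewise S fun x ↦ φ x ^ 2, ← influence_eq_expect_sq_sub,
    ← h_compl] at h_rect
  have h_weight := expect_sq_sub_condAvg_sq_le_highWeight S φ
  simp_rw [condAvg, piecewise_compl] at h_weight
  linarith

lemma influence_union_le {S T : Finset ι} (h : Disjoint S T) (φ : (ι → α) → ℝ) :
    influence (S ∪ T) φ ≤ 2 * influence S φ + 2 * influence T φ := by
  have h_union (x y : ι → α) : (S ∪ T).piecewise y x =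
      S.piecewise (T.piecewise x y) (T.piecewise y x) := by
    ext k
    have h_disjoint := disjoint_left.mp h
    by_cases hS : k ∈ S <;> by_cases hT : k ∈ T <;> simp_all
  have h_shift : 𝔼 x, 𝔼 y, (φ (T.piecewise y x) -
      φ (S.piecewise (T.piecewise x y) (T.piecewise y x))) ^ 2 = influence S φ :=
    (expect_expect_piecewise T fun y x ↦ (φ x - φ (S.piecewise y x)) ^ 2).trans
      (expect_comm _ _ _)
  calc influence (S ∪ T) φ
    _ ≤ 𝔼 x, 𝔼 y, (2 * (φ (T.piecewise y x) -
            φ (S.piecewise (T.piecewise x y) (T.piecewise y x))) ^ 2 +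
          2 * (φ x - φ (T.piecewise y x)) ^ 2) := by
        simp_rw [influence, h_union]
        gcongr with x _ y
        have := add_sq_le (a := φ x - φ (T.piecewise y x))
          (b := φ (T.piecewise y x) - φ (S.piecewise (T.piecewise x y) (T.piecewise y x)))
        rw [sub_add_sub_cancel] at this
        linarith
    _ = 2 * influence S φ + 2 * influence T φ := by
        simp_rw [expect_add_distrib, ← mul_expect, h_shift, influence]

lemma exists_influence_compl_singleton_le [Nonempty ι] {φ : (ι → α) → ℝ} {δ : ℝ} (hδ : 0 ≤ δ)
    (h : ∀ S, influence S φ * influence Sᶜ φ ≤ δ ^ 2) : ∃ k, influence {k}ᶜ φ ≤ 4 * δ := by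
  have h_dichotomy (S : Finset ι) : influence S φ ≤ δ ∨ influence Sᶜ φ ≤ δ := by
    by_contra! hS
    nlinarith [h S, mul_lt_mul'' hS.1 hS.2 hδ hδ]
  -- A minimal nonempty set with small-influence complement can be trimmed to a single coordinate.
  obtain ⟨S, ⟨hS_nonempty, hS⟩, hS_min⟩ := exists_minimal_of_wellFoundedLT
    (fun S : Finset ι ↦ S.Nonempty ∧ influence Sᶜ φ ≤ δ)
    ⟨univ, univ_nonempty, by simpa [influence_empty] using hδ⟩
  obtain ⟨k, hk⟩ := hS_nonempty
  have h_erase : influence (S.erase k) φ ≤ δ := by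
    rcases (S.erase k).eq_empty_or_nonempty with h_empty | h_nonempty
    · rwa [h_empty, influence_empty]
    · refine (h_dichotomy _).resolve_right fun h_le ↦ ?_
      exact notMem_erase k S (hS_min ⟨h_nonempty, h_le⟩ (erase_subset k S) hk)
  have h_compl : ({k} : Finset ι)ᶜ = Sᶜ ∪ S.erase k := by
    ext l
    by_cases hl : l = k <;> simp [hl, hk, em']
  have h_disjoint : Disjoint Sᶜ (S.erase k) :=
    disjoint_compl_left.mono_right (erase_subset k S)
  refine ⟨k, ?_⟩
  rw [h_compl]
  linarith [influence_union_le h_disjoint φ]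

lemma exists_expect_sq_sub_update_le [Nonempty ι] [Nonempty α] [DecidableEq α] {φ : (ι → α) → ℝ}
    (hφ : ∀ x, φ x = 0 ∨ φ x = 1) :
    ∃ k y, 𝔼 x, (φ x - φ (Function.update y k (x k))) ^ 2 ≤ 4 * √(12 * highWeight φ) := by
  obtain ⟨k, hk⟩ := exists_influence_compl_singleton_le (Real.sqrt_nonneg (12 * highWeight φ))
    fun S ↦ by
      rw [Real.sq_sqrt (by linarith [highWeight_nonneg φ])]
      exact influence_mul_influence_compl_le S hφ
  have h_update (x y : ι → α) : ({k}ᶜ : Finset ι).piecewise y x = Function.update y k (x k) := by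
    ext l
    by_cases hl : l = k
    · subst hl
      simp
    · simp [hl]
  rw [influence, expect_comm] at hk
  obtain ⟨y, -, hy⟩ := exists_le_of_expect_le univ_nonempty hk
  simp_rw [h_update] at hy
  exact ⟨k, y, hy⟩

end Influence

section Correlation

variable {ι Z α : Type*} [Fintype ι] [DecidableEq ι] [Fintype Z] [Fintype α]

lemma expect_comp_of_uniform {c : Z → α} (hc : ∀ a, unifPr (fun z ↦ c z = a) = 1 / Fintype.card α)
    (φ : (ι → α) → ℝ) : 𝔼 z : ι → Z, φ (fun k ↦ c (z k)) = 𝔼 x, φ x := by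
  rw [expect_comp_eq_sum]
  simp_rw [hc, prod_const, card_univ, Fintype.expect_eq_sum_div_card, sum_div, Fintype.card_fun,
    Nat.cast_pow]
  exact sum_congr rfl fun x _ ↦ by ring

lemma unifPr_comp_of_uniform {c : Z → α} (hc : ∀ a, unifPr (fun z ↦ c z = a) = 1 / Fintype.card α)
    (P : (ι → α) → Prop) : unifPr (fun z : ι → Z ↦ P fun k ↦ c (z k)) = unifPr P := by
  classical
  simp_rw [unifPr_eq_expect]
  exact expect_comp_of_uniform hc fun x ↦ if P x then 1 else 0

lemma expect_mul_comp_of_correlated [DecidableEq α] [Nonempty α] {a b : Z → α} {ρ : ℝ}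
    (h : ∀ x y, unifPr (fun z ↦ a z = x ∧ b z = y) =
      (1 + ρ * centeredKernel x y) / (Fintype.card α : ℝ) ^ 2) (φ ψ : (ι → α) → ℝ) :
    𝔼 z : ι → Z, φ (fun k ↦ a (z k)) * ψ (fun k ↦ b (z k)) =
      ∑ T : Finset ι, ρ ^ #T * 𝔼 x, efronStein T φ x * efronStein T ψ x := by
  calc 𝔼 z : ι → Z, φ (fun k ↦ a (z k)) * ψ (fun k ↦ b (z k))
    _ = ∑ w : ι → α × α, (∏ k, (1 + ρ * centeredKernel (w k).1 (w k).2) /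
          (Fintype.card α : ℝ) ^ 2) * (φ (fun k ↦ (w k).1) * ψ (fun k ↦ (w k).2)) := by
        rw [expect_comp_eq_sum (fun z ↦ (a z, b z))
          fun w ↦ φ (fun k ↦ (w k).1) * ψ (fun k ↦ (w k).2)]
        simp_rw [← h, Prod.ext_iff]
    _ = ∑ x : ι → α, ∑ y : ι → α, (∏ k, (1 + ρ * centeredKernel (x k) (y k)) /
          (Fintype.card α : ℝ) ^ 2) * (φ x * ψ y) := by
        rw [← sum_product', univ_product_univ]
        exact Fintype.sum_equiv (Equiv.arrowProdEquivProdArrow ι (fun _ ↦ α) fun _ ↦ α) _ _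
          fun _ ↦ rfl
    _ = 𝔼 x : ι → α, 𝔼 y, (∑ T : Finset ι, ρ ^ #T * ∏ k ∈ T, centeredKernel (x k) (y k)) *
          (φ x * ψ y) := by
        simp_rw [prod_div_distrib, prod_one_add, powerset_univ, prod_mul_distrib, prod_const,
          Fintype.expect_eq_sum_div_card, sum_div, Fintype.card_fun, card_univ, Nat.cast_pow]
        refine sum_congr rfl fun x _ ↦ sum_congr rfl fun y _ ↦ ?_
        rw [← sum_div]
        ring
    _ = ∑ T : Finset ι, ρ ^ #T * 𝔼 x, φ x * efronStein T ψ x := by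
        simp_rw [efronStein, mul_expect, ← expect_sum_comm, sum_mul]
        refine expect_congr rfl fun x _ ↦ expect_congr rfl fun y _ ↦ sum_congr rfl fun T _ ↦ ?_
        ring
    _ = ∑ T : Finset ι, ρ ^ #T * 𝔼 x, efronStein T φ x * efronStein T ψ x :=
        sum_congr rfl fun T _ ↦ by rw [expect_mul_efronStein]

end Correlation

section Perm

variable {α : Type*} [Fintype α] [DecidableEq α]

lemma sum_unifPr_and_eq {Z Y : Type*} [Fintype Z] [Fintype Y] (P : Z → Prop) (c : Z → Y) :
    ∑ y, unifPr (fun z ↦ P z ∧ c z = y) = unifPr P := by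
  classical
  simp_rw [unifPr_eq_expect, ← expect_sum_comm]
  exact expect_congr rfl fun z _ ↦ by by_cases h : P z <;> simp [h]

lemma unifPr_comp_equiv {X Y : Type*} [Fintype X] [Fintype Y] (e : X ≃ Y) (P : Y → Prop) :
    unifPr (fun x ↦ P (e x)) = unifPr P := by
  rw [unifPr, unifPr, Fintype.card_congr e, Nat.card_congr (e.subtypeEquiv fun _ ↦ Iff.rfl)]

lemma unifPr_perm_apply_eq (i a : α) :
    unifPr (fun σ : Equiv.Perm α ↦ σ i = a) = 1 / Fintype.card α := by
  have h_const (b : α) :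
      unifPr (fun σ : Equiv.Perm α ↦ True ∧ σ i = b) = unifPr fun σ : Equiv.Perm α ↦ σ i = a := by
    rw [← unifPr_comp_equiv (Equiv.mulLeft (Equiv.swap a b))]
    simp [Equiv.swap_apply_eq_iff]
  have h_sum := sum_unifPr_and_eq (fun _ ↦ True) fun σ : Equiv.Perm α ↦ σ i
  have : Nonempty α := ⟨a⟩
  have h_card : (Fintype.card α : ℝ) ≠ 0 := Nat.cast_ne_zero.mpr Fintype.card_ne_zero
  have h_true : unifPr (fun _ : Equiv.Perm α ↦ True) = 1 := by simp [unifPr_eq_expect]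
  simp_rw [h_const, sum_const, card_univ, nsmul_eq_mul, h_true] at h_sum
  rw [eq_div_iff h_card, mul_comm, h_sum]

lemma unifPr_perm_apply_eq_and_of_ne {i i' a b : α} (hi : i ≠ i') (hab : a ≠ b) :
    unifPr (fun σ : Equiv.Perm α ↦ σ i = a ∧ σ i' = b) =
      1 / (Fintype.card α * (Fintype.card α - 1)) := by
  have h_const (c : α) (hca : c ≠ a) : unifPr (fun σ : Equiv.Perm α ↦ σ i = a ∧ σ i' = c) =
      unifPr fun σ : Equiv.Perm α ↦ σ i = a ∧ σ i' = b := by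
    rw [← unifPr_comp_equiv (Equiv.mulLeft (Equiv.swap b c))]
    simp [Equiv.swap_apply_eq_iff, Equiv.swap_apply_of_ne_of_ne hab hca.symm]
  have h_diag : unifPr (fun σ : Equiv.Perm α ↦ σ i = a ∧ σ i' = a) = 0 := by
    have h_false (σ : Equiv.Perm α) : ¬ (σ i = a ∧ σ i' = a) :=
      fun h ↦ hi (σ.injective (h.1.trans h.2.symm))
    simp [unifPr_eq_expect, h_false]
  have h_sum := sum_unifPr_and_eq (fun σ : Equiv.Perm α ↦ σ i = a) fun σ ↦ σ i'
  have : Nontrivial α := ⟨i, i', hi⟩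
  have h_card : (1 : ℝ) < Fintype.card α := mod_cast Fintype.one_lt_card
  rw [← add_sum_erase univ _ (mem_univ a), h_diag, zero_add,
    sum_congr rfl fun c hc ↦ h_const c (ne_of_mem_erase hc), sum_const, nsmul_eq_mul,
    card_erase_of_mem (mem_univ a), card_univ, Nat.cast_pred Fintype.card_pos,
    unifPr_perm_apply_eq, eq_div_iff (by linarith)] at h_sum
  rw [eq_div_iff (by nlinarith)]
  linear_combination h_sum

/-- The correlation of the values of a uniform permutation of `α` at `i` and at `i'`. -/
noncomputable def permCorrelation (i i' : α) : ℝ :=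
  if i = i' then 1 else -1 / (Fintype.card α - 1)

lemma unifPr_perm_apply_eq_and [Nontrivial α] (i i' a b : α) :
    unifPr (fun σ : Equiv.Perm α ↦ σ i = a ∧ σ i' = b) =
      (1 + permCorrelation i i' * centeredKernel a b) / (Fintype.card α : ℝ) ^ 2 := by
  have h_card : (1 : ℝ) < Fintype.card α := mod_cast Fintype.one_lt_card
  have h_card' : (Fintype.card α : ℝ) - 1 ≠ 0 := by linarith
  unfold permCorrelation centeredKernel
  rcases eq_or_ne i i' with rfl | hi <;> rcases eq_or_ne a b with rfl | hab
  · simp only [and_self, unifPr_perm_apply_eq, if_true]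
    field_simp
    ring
  · have h_false (σ : Equiv.Perm α) : ¬ (σ i = a ∧ σ i = b) := fun h ↦ hab (h.1.symm.trans h.2)
    simp [unifPr_eq_expect, h_false, hab]
  · have h_false (σ : Equiv.Perm α) : ¬ (σ i = a ∧ σ i' = a) :=
      fun h ↦ hi (σ.injective (h.1.trans h.2.symm))
    have h_zero : unifPr (fun σ : Equiv.Perm α ↦ σ i = a ∧ σ i' = a) = 0 := by
      simp [unifPr_eq_expect, h_false]
    rw [h_zero, if_neg hi, if_pos rfl]
    field_simp
    ring
  · rw [unifPr_perm_apply_eq_and_of_ne hi hab, if_neg hi, if_neg hab]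
    field_simp
    ring

lemma sum_sum_permCorrelation_pow_mul (t : ℕ) (v : α → ℝ) :
    ∑ i, ∑ i', permCorrelation i i' ^ t * (v i * v i') =
      ∑ i, v i ^ 2 + (-1 / (Fintype.card α - 1) : ℝ) ^ t * ((∑ i, v i) ^ 2 - ∑ i, v i ^ 2) := by
  set s : ℝ := (-1 / (Fintype.card α - 1) : ℝ) ^ t with hs
  have h_pow (i i' : α) : permCorrelation i i' ^ t * (v i * v i') =
      s * (v i * v i') + if i = i' then (1 - s) * (v i * v i') else 0 := by
    unfold permCorrelation
    split_ifs
    · rw [one_pow]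
      ring
    · rw [← hs, add_zero]
  simp_rw [h_pow, sum_add_distrib, sum_ite_eq, mem_univ, if_true, ← mul_sum, ← sum_mul, ← sq]
  ring

lemma sum_sum_permCorrelation_mul_nonneg [Nontrivial α] (v : α → ℝ) :
    0 ≤ ∑ i, ∑ i', permCorrelation i i' * (v i * v i') := by
  have h_card : (1 : ℝ) < Fintype.card α := mod_cast Fintype.one_lt_card
  have h_sq : (∑ i, v i) ^ 2 ≤ Fintype.card α * ∑ i, v i ^ 2 := sq_sum_le_card_mul_sum_sq
  have h_pow := sum_sum_permCorrelation_pow_mul 1 v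
  simp_rw [pow_one] at h_pow
  rw [h_pow]
  have : ∑ i, v i ^ 2 + (-1 / (Fintype.card α - 1) : ℝ) * ((∑ i, v i) ^ 2 - ∑ i, v i ^ 2) =
      (Fintype.card α * ∑ i, v i ^ 2 - (∑ i, v i) ^ 2) / (Fintype.card α - 1) := by
    field_simp [(by linarith : (Fintype.card α : ℝ) - 1 ≠ 0)]
    ring
  rw [this]
  exact div_nonneg (by linarith) (by linarith)

lemma le_sum_sum_permCorrelation_pow_mul [Nontrivial α] {t : ℕ} (ht : 2 ≤ t) (v : α → ℝ) :
    (1 - 1 / (Fintype.card α - 1)) * ∑ i, v i ^ 2 ≤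
      ∑ i, ∑ i', permCorrelation i i' ^ t * (v i * v i') := by
  have h_card : (2 : ℝ) ≤ Fintype.card α := mod_cast Fintype.one_lt_card
  set n : ℝ := (Fintype.card α : ℝ) with hn
  set q : ℝ := ∑ i, v i ^ 2 with hq
  have h_nonneg : 0 ≤ q := sum_nonneg fun _ _ ↦ sq_nonneg _
  have h_sq : (∑ i, v i) ^ 2 ≤ n * q := sq_sum_le_card_mul_sum_sq
  have h_abs : |(∑ i, v i) ^ 2 - q| ≤ (n - 1) * q :=
    abs_le.mpr ⟨by nlinarith [sq_nonneg (∑ i, v i)], by linarith⟩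
  have h_pow : |(-1 / (n - 1)) ^ t| ≤ (1 / (n - 1)) ^ 2 := by
    rw [abs_pow, abs_div, abs_neg, abs_one, abs_of_pos (by linarith : 0 < n - 1)]
    exact pow_le_pow_of_le_one (div_nonneg zero_le_one (by linarith))
      (div_le_one_of_le₀ (by linarith) (by linarith)) ht
  have h_prod : |(-1 / (n - 1)) ^ t * ((∑ i, v i) ^ 2 - q)| ≤ 1 / (n - 1) * q :=
    calc |(-1 / (n - 1)) ^ t * ((∑ i, v i) ^ 2 - q)|
      _ ≤ (1 / (n - 1)) ^ 2 * ((n - 1) * q) := by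
          rw [abs_mul]
          gcongr
      _ = 1 / (n - 1) * q := by
          field_simp [(by linarith : n - 1 ≠ 0)]
  rw [sum_sum_permCorrelation_pow_mul, ← hn, ← hq]
  linarith [neg_le_of_abs_le h_prod]

end Perm

section Polymorphism

variable {ι α : Type*} [Fintype ι] [DecidableEq ι] [Fintype α] [DecidableEq α]

lemma expect_sq_sum_perm_eq [Nontrivial α] (φ : α → (ι → α) → ℝ) :
    𝔼 xs : ι → Equiv.Perm α, (∑ i, φ i fun k ↦ xs k i) ^ 2 =
      ∑ T : Finset ι, 𝔼 x, ∑ i, ∑ i',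
        permCorrelation i i' ^ #T * (efronStein T (φ i) x * efronStein T (φ i') x) := by
  simp_rw [sq, sum_mul_sum, expect_sum_comm, ← mul_expect]
  calc ∑ i, ∑ i', 𝔼 xs : ι → Equiv.Perm α, φ i (fun k ↦ xs k i) * φ i' (fun k ↦ xs k i')
    _ = ∑ i, ∑ i', ∑ T : Finset ι, permCorrelation i i' ^ #T *
          𝔼 x, efronStein T (φ i) x * efronStein T (φ i') x :=
        sum_congr rfl fun i _ ↦ sum_congr rfl fun i' _ ↦
          expect_mul_comp_of_correlated (unifPr_perm_apply_eq_and i i') (φ i) (φ i')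
    _ = ∑ T : Finset ι, ∑ i, ∑ i', permCorrelation i i' ^ #T *
          𝔼 x, efronStein T (φ i) x * efronStein T (φ i') x :=
        (sum_congr rfl fun i _ ↦ sum_comm).trans sum_comm

lemma le_expect_sq_sum_perm [Nontrivial α] (φ : α → (ι → α) → ℝ) :
    (∑ i, 𝔼 x, φ i x) ^ 2 + (1 - 1 / (Fintype.card α - 1)) * ∑ i, highWeight (φ i) ≤
      𝔼 xs : ι → Equiv.Perm α, (∑ i, φ i fun k ↦ xs k i) ^ 2 := by
  set c : ℝ := 1 - 1 / (Fintype.card α - 1)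
  calc (∑ i, 𝔼 x, φ i x) ^ 2 + c * ∑ i, highWeight (φ i)
    _ = ∑ T : Finset ι, ((if T = ∅ then (∑ i, 𝔼 x, φ i x) ^ 2 else 0) +
          if 2 ≤ #T then 𝔼 x, c * ∑ i, efronStein T (φ i) x ^ 2 else 0) := by
        simp_rw [highWeight, sum_add_distrib, ← sum_filter, ← mul_expect, expect_sum_comm,
          ← mul_sum]
        rw [sum_comm]
        simp [filter_eq']
    _ ≤ ∑ T : Finset ι, 𝔼 x, ∑ i, ∑ i',
          permCorrelation i i' ^ #T * (efronStein T (φ i) x * efronStein T (φ i') x) := by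
        refine sum_le_sum fun T _ ↦ ?_
        rcases Nat.lt_trichotomy #T 1 with hT | hT | hT
        · obtain rfl : T = ∅ := card_eq_zero.mp (by omega)
          simp [efronStein_empty, sq, sum_mul_sum]
        · have h_ne : T ≠ ∅ := by
            rintro rfl
            simp at hT
          simp only [hT, h_ne, if_false, pow_one, Nat.not_ofNat_le_one, add_zero]
          exact expect_nonneg fun x _ ↦
            sum_sum_permCorrelation_mul_nonneg fun i ↦ efronStein T (φ i) x
        · have h_ne : T ≠ ∅ := by
            rintro rfl
            simp at hT
          rw [if_neg h_ne, if_pos (Nat.succ_le_of_lt hT), zero_add]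
          exact expect_le_expect fun x _ ↦
            le_sum_sum_permCorrelation_pow_mul hT fun i ↦ efronStein T (φ i) x
    _ = 𝔼 xs : ι → Equiv.Perm α, (∑ i, φ i fun k ↦ xs k i) ^ 2 := (expect_sq_sum_perm_eq φ).symm

lemma sum_highWeight_le_expect_sq_sum_perm_sub_one (hα : 3 ≤ Fintype.card α)
    (φ : α → (ι → α) → ℝ) :
    ∑ i, highWeight (φ i) ≤ 2 * 𝔼 xs : ι → Equiv.Perm α, (∑ i, φ i (fun k ↦ xs k i) - 1) ^ 2 := by
  have : Nontrivial α := Fintype.one_lt_card_iff_nontrivial.mp (by omega)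
  have h_card : (3 : ℝ) ≤ Fintype.card α := mod_cast hα
  have h_coef : (1 : ℝ) / (Fintype.card α - 1) ≤ 1 / 2 :=
    one_div_le_one_div_of_le two_pos (by linarith)
  have h_mean : 𝔼 xs : ι → Equiv.Perm α, ∑ i, φ i (fun k ↦ xs k i) = ∑ i, 𝔼 x, φ i x := by
    rw [expect_sum_comm]
    exact sum_congr rfl fun i _ ↦ expect_comp_of_uniform (unifPr_perm_apply_eq i) (φ i)
  have h_nonneg : 0 ≤ ∑ i, highWeight (φ i) := sum_nonneg fun i _ ↦ highWeight_nonneg (φ i)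
  have h_sq := le_expect_sq_sum_perm φ
  simp_rw [sub_sq, mul_one, one_pow, expect_add_distrib, expect_sub_distrib, ← mul_expect, h_mean,
    Fintype.expect_const]
  nlinarith [sq_nonneg (∑ i, 𝔼 x, φ i x - 1)]

/-- The probability that `f` fails to map a tuple of independent uniform permutations of `α` to a
permutation: `f` is an `ε`-approximate polymorphism exactly when this is at most `ε`. -/
noncomputable def permDefect (f : α → (ι → α) → α) : ℝ :=
  unifPr fun xs : ι → Equiv.Perm α ↦ ¬ Function.Bijective fun i ↦ f i fun k ↦ xs k i

lemma highWeight_indicator_le_permDefect (hα : 3 ≤ Fintype.card α) (f : α → (ι → α) → α)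
    (i j : α) : highWeight (fun x ↦ if f i x = j then 1 else 0) ≤
      2 * (Fintype.card α : ℝ) ^ 2 * permDefect f := by
  classical
  set φ : α → (ι → α) → ℝ := fun i x ↦ if f i x = j then 1 else 0 with hφ
  have h_pointwise (xs : ι → Equiv.Perm α) : (∑ i, φ i (fun k ↦ xs k i) - 1) ^ 2 ≤
      (Fintype.card α : ℝ) ^ 2 *
        if ¬ Function.Bijective fun i ↦ f i fun k ↦ xs k i then 1 else 0 := by
    split_ifs with h
    · have h_one : ∑ i, φ i (fun k ↦ xs k i) = 1 := by
        rw [h.sum_comp fun a ↦ if a = j then (1 : ℝ) else 0]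
        simp
      simp [h_one]
    · have h_card : (1 : ℝ) ≤ Fintype.card α := by exact_mod_cast (by omega : 1 ≤ Fintype.card α)
      have h_le : ∑ i, φ i (fun k ↦ xs k i) ≤ Fintype.card α := by
        simp only [hφ, sum_boole]
        exact_mod_cast card_le_univ _
      have h_nonneg : 0 ≤ ∑ i, φ i (fun k ↦ xs k i) := sum_nonneg fun i _ ↦ by positivity
      rw [mul_one]
      exact sq_le_sq' (by linarith) (by linarith)
  calc highWeight (φ i)
    _ ≤ ∑ i, highWeight (φ i) :=
        single_le_sum (f := fun i ↦ highWeight (φ i)) (fun i _ ↦ highWeight_nonneg _) (mem_univ i)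
    _ ≤ 2 * 𝔼 xs : ι → Equiv.Perm α, (∑ i, φ i (fun k ↦ xs k i) - 1) ^ 2 :=
        sum_highWeight_le_expect_sq_sum_perm_sub_one hα φ
    _ ≤ 2 * ((Fintype.card α : ℝ) ^ 2 * permDefect f) := by
        gcongr
        rw [permDefect, unifPr_eq_expect, mul_expect]
        exact expect_le_expect fun xs _ ↦ h_pointwise xs
    _ = 2 * (Fintype.card α : ℝ) ^ 2 * permDefect f := by ring

lemma exists_unifPr_not_iff_le [Nonempty ι] (hα : 3 ≤ Fintype.card α) (f : α → (ι → α) → α)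
    (i j : α) : ∃ k, ∃ G : α → Prop, unifPr (fun x ↦ ¬ (f i x = j ↔ G (x k))) ≤
      4 * √24 * Fintype.card α * √(permDefect f) := by
  classical
  have : Nonempty α := ⟨i⟩
  obtain ⟨k, y, h_le⟩ := exists_expect_sq_sub_update_le
    (φ := fun x ↦ if f i x = j then (1 : ℝ) else 0) fun x ↦ by split_ifs <;> simp
  refine ⟨k, fun a ↦ f i (Function.update y k a) = j, ?_⟩
  calc unifPr (fun x ↦ ¬ (f i x = j ↔ f i (Function.update y k (x k)) = j))
    _ = 𝔼 x, ((if f i x = j then (1 : ℝ) else 0) -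
          if f i (Function.update y k (x k)) = j then 1 else 0) ^ 2 := by
        rw [unifPr_eq_expect]
        refine expect_congr rfl fun x _ ↦ ?_
        by_cases h : f i x = j <;> by_cases h' : f i (Function.update y k (x k)) = j <;>
          simp [h, h']
    _ ≤ 4 * √(12 * highWeight fun x ↦ if f i x = j then 1 else 0) := h_le
    _ ≤ 4 * √(24 * (Fintype.card α : ℝ) ^ 2 * permDefect f) := by
        refine mul_le_mul_of_nonneg_left (Real.sqrt_le_sqrt ?_) zero_le_four
        linarith [highWeight_indicator_le_permDefect hα f i j]
    _ = 4 * √24 * Fintype.card α * √(permDefect f) := by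
        rw [Real.sqrt_mul (by positivity), Real.sqrt_mul (by positivity),
          Real.sqrt_sq (by positivity)]
        ring

end Polymorphism

section PermSystem

variable {ι α : Type*} {k : α → α → ι} {G : α → α → α → Prop}

/-- The system of conditions `G i j` on the single coordinates `k i j` describes an exact
polymorphism of the permutations of `α`: it holds at exactly the entries of a permutation matrix,
whatever permutations are plugged in. -/
def IsPermSystem (k : α → α → ι) (G : α → α → α → Prop) : Prop :=
  ∀ z : ι → Equiv.Perm α, ∃ σ : Equiv.Perm α, ∀ i j, σ i = j ↔ G i j (z (k i j) i)

namespace IsPermSystem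

lemma left_unique (h : IsPermSystem k G) (z : ι → Equiv.Perm α) {i i' j : α}
    (hi : G i j (z (k i j) i)) (hi' : G i' j (z (k i' j) i')) : i = i' := by
  obtain ⟨σ, hσ⟩ := h z
  exact σ.injective (((hσ i j).mpr hi).trans ((hσ i' j).mpr hi').symm)

lemma right_unique (h : IsPermSystem k G) (z : ι → Equiv.Perm α) {i j j' : α}
    (hj : G i j (z (k i j) i)) (hj' : G i j' (z (k i j') i)) : j = j' := by
  obtain ⟨σ, hσ⟩ := h z
  exact ((hσ i j).mpr hj).symm.trans ((hσ i j').mpr hj')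

lemma exists_left (h : IsPermSystem k G) (z : ι → Equiv.Perm α) (j : α) :
    ∃ i, G i j (z (k i j) i) := by
  obtain ⟨σ, hσ⟩ := h z
  exact ⟨σ.symm j, (hσ _ j).mp (σ.apply_symm_apply j)⟩

lemma coord_eq_and_value_eq (h : IsPermSystem k G) {i i' j a a' : α} (hi : i ≠ i') (ha : G i j a)
    (ha' : G i' j a') : k i j = k i' j ∧ a = a' := by
  classical
  by_contra h_ne
  obtain ⟨z, hz, hz'⟩ : ∃ z : ι → Equiv.Perm α, z (k i j) i = a ∧ z (k i' j) i' = a' := by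
    by_cases hk : k i j = k i' j
    · have : MulAction.IsMultiplyPretransitive (Equiv.Perm α) α 2 :=
        Equiv.Perm.isMultiplyPretransitive α 2
      obtain ⟨τ, hτ, hτ'⟩ :=
        MulAction.is_two_pretransitive_iff.mp this hi fun h_eq ↦ h_ne ⟨hk, h_eq⟩
      exact ⟨fun _ ↦ τ, hτ, hτ'⟩
    · refine ⟨fun l ↦ if l = k i j then Equiv.swap i a else Equiv.swap i' a', ?_, ?_⟩
      · simp
      · simp [Ne.symm hk]
  exact hi (h.left_unique z (hz ▸ ha) (hz' ▸ ha'))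

lemma exists_forall_iff_eq (h : IsPermSystem k G) {j : α} (hj : ∀ i, ∃ a, ¬ G i j a) :
    ∃ l s, ∀ i, k i j = l ∧ ∀ a, G i j a ↔ a = s := by
  classical
  obtain ⟨i, hi⟩ := h.exists_left 1 j
  obtain ⟨a, ha⟩ := hj i
  obtain ⟨i', hi'⟩ := h.exists_left (fun _ ↦ Equiv.swap i a) j
  have h_ne : i ≠ i' := by
    rintro rfl
    exact ha (by simpa using hi')
  obtain ⟨-, h_value⟩ := h.coord_eq_and_value_eq h_ne hi hi'
  have h_coord_value (i₁ b : α) (hb : G i₁ j b) : k i₁ j = k i j ∧ b = i := by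
    rcases eq_or_ne i₁ i with rfl | hi₁
    · exact ⟨rfl, (h.coord_eq_and_value_eq h_ne hb hi').2.trans h_value.symm⟩
    · exact h.coord_eq_and_value_eq hi₁ hb hi
  have h_holds (i₁ : α) : G i₁ j i := by
    obtain ⟨i₂, hi₂⟩ := h.exists_left (fun _ ↦ Equiv.swap i₁ i) j
    obtain ⟨-, h_eq⟩ := h_coord_value _ _ hi₂
    obtain rfl : i₂ = i₁ := (Equiv.swap i₁ i).injective (by simpa using h_eq)
    simpa using hi₂
  exact ⟨k i j, i, fun i₁ ↦ ⟨(h_coord_value _ _ (h_holds i₁)).1,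
    fun b ↦ ⟨fun hb ↦ (h_coord_value _ _ hb).2, fun hb ↦ hb ▸ h_holds i₁⟩⟩⟩

lemma exists_forall_coord_eq (h : IsPermSystem k G) {j₀ : α} (hj₀ : ∀ i, ∃ a, ¬ G i j₀ a) :
    ∃ l, ∀ j, ∃ s, ∀ i, k i j = l ∧ ∀ a, G i j a ↔ a = s := by
  classical
  obtain ⟨l₀, s₀, h₀⟩ := h.exists_forall_iff_eq hj₀
  have h_nonconst (j i : α) : ∃ a, ¬ G i j a := by
    by_contra! h_const
    obtain rfl : j = j₀ := h.right_unique (fun _ ↦ Equiv.swap i s₀) (h_const _)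
      (((h₀ i).2 _).mpr (Equiv.swap_apply_left _ _))
    obtain ⟨a, ha⟩ := hj₀ i
    exact ha (h_const a)
  refine ⟨l₀, fun j ↦ ?_⟩
  obtain ⟨l, s, hs⟩ := h.exists_forall_iff_eq (h_nonconst j)
  refine ⟨s, fun i ↦ ⟨by_contra fun hk ↦ ?_, (hs i).2⟩⟩
  -- Different coordinates could be set independently, making row `i` hit both columns.
  obtain rfl : j = j₀ := h.right_unique
    (fun m ↦ if m = l₀ then Equiv.swap i s₀ else Equiv.swap i s)
    (((hs i).2 _).mpr (by simp [hk])) (((h₀ i).2 _).mpr (by simp [(h₀ i).1]))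
  exact hk (h₀ i).1

theorem dictator_or_constant [Finite α] (h : IsPermSystem k G) :
    (∃ l, ∃ π : Equiv.Perm α, ∀ i j, k i j = l ∧ ∀ a, G i j a ↔ π a = j) ∨
      ∀ j, ∃ i, ∀ a, G i j a := by
  classical
  by_cases h_const : ∀ j, ∃ i, ∀ a, G i j a
  · exact Or.inr h_const
  push Not at h_const
  obtain ⟨j₀, hj₀⟩ := h_const
  obtain ⟨l, hl⟩ := h.exists_forall_coord_eq hj₀
  choose s hs using hl
  have h_inj : Function.Injective s := fun j j' hjj' ↦
    h.right_unique (i := j₀) (fun _ ↦ Equiv.swap j₀ (s j)) (((hs j j₀).2 _).mpr (by simp))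
      (((hs j' j₀).2 _).mpr (by simp [hjj']))
  refine Or.inl ⟨l, (Equiv.ofBijective s (Finite.injective_iff_bijective.mp h_inj)).symm,
    fun i j ↦ ⟨(hs j i).1, fun a ↦ ?_⟩⟩
  rw [(hs j i).2, Equiv.symm_apply_eq]
  rfl

end IsPermSystem

end PermSystem

section Stability

variable {ι α : Type*} [Fintype ι] [DecidableEq ι] [Fintype α]

lemma IsPermSystem.exists_unifPr_ne_le {f : α → (ι → α) → α} {k : α → α → ι}
    {G : α → α → α → Prop} {η : ℝ} (h : IsPermSystem k G)
    (hG : ∀ i j, unifPr (fun x ↦ ¬ (f i x = j ↔ G i j (x (k i j)))) ≤ η) :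
    (∃ l, ∃ π : Equiv.Perm α, ∀ i, unifPr (fun x ↦ f i x ≠ π (x l)) ≤ Fintype.card α * η) ∨
      ∀ j, ∃ i, unifPr (fun x ↦ f i x ≠ j) ≤ η := by
  rcases h.dictator_or_constant with ⟨l, π, hπ⟩ | h_const
  · refine Or.inl ⟨l, π, fun i ↦ ?_⟩
    calc unifPr (fun x ↦ f i x ≠ π (x l))
      _ ≤ unifPr fun x ↦ ∃ j, ¬ (f i x = j ↔ G i j (x (k i j))) := by
          refine unifPr_mono fun x hx ↦ ⟨f i x, ?_⟩
          rw [(hπ i (f i x)).1, (hπ i (f i x)).2]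
          exact fun h ↦ hx (h.mp rfl).symm
      _ ≤ ∑ j, unifPr fun x ↦ ¬ (f i x = j ↔ G i j (x (k i j))) := unifPr_exists_le _
      _ ≤ ∑ _j : α, η := sum_le_sum fun j _ ↦ hG i j
      _ = Fintype.card α * η := by simp
  · refine Or.inr fun j ↦ ?_
    obtain ⟨i, hi⟩ := h_const j
    exact ⟨i, (unifPr_mono fun x hx h ↦ hx (h.mpr (hi _))).trans (hG i j)⟩

variable [DecidableEq α]

lemma isPermSystem_of_unifPr_not_iff_le {f : α → (ι → α) → α} {k : α → α → ι}
    {G : α → α → α → Prop} {η : ℝ}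
    (hG : ∀ i j, unifPr (fun x ↦ ¬ (f i x = j ↔ G i j (x (k i j)))) ≤ η)
    (h_small : permDefect f + Fintype.card α ^ 2 * η <
      (1 / (Fintype.card α).factorial : ℝ) ^ Fintype.card α ^ 2) : IsPermSystem k G := by
  by_contra h_not
  obtain ⟨z, hz⟩ := not_forall.mp h_not
  set U : Finset ι := univ.image fun q : α × α ↦ k q.1 q.2
  have hk_mem (i j : α) : k i j ∈ U :=
    mem_image_of_mem (fun q : α × α ↦ k q.1 q.2) (mem_univ (i, j))
  have h_card : #U ≤ Fintype.card α ^ 2 := by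
    simpa [sq] using card_image_le (s := univ) (f := fun q : α × α ↦ k q.1 q.2)
  let Bad (xs : ι → Equiv.Perm α) (q : α × α) : Prop :=
    ¬ (f q.1 (fun l ↦ xs l q.1) = q.2 ↔ G q.1 q.2 (xs (k q.1 q.2) q.1))
  have h_bad (xs : ι → Equiv.Perm α) (hxs : ∀ l ∈ U, xs l = z l) :
      (¬ Function.Bijective fun i ↦ f i fun l ↦ xs l i) ∨ ∃ q, Bad xs q := by
    by_contra! h
    obtain ⟨h_bij, h_good⟩ := h
    refine hz ⟨Equiv.ofBijective _ h_bij, fun i j ↦ ?_⟩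
    rw [← hxs _ (hk_mem i j)]
    exact not_not.mp (h_good (i, j))
  refine h_small.not_ge ?_
  calc (1 / (Fintype.card α).factorial : ℝ) ^ Fintype.card α ^ 2
    _ ≤ (1 / (Fintype.card α).factorial : ℝ) ^ #U :=
        pow_le_pow_of_le_one (by positivity)
          (div_le_one_of_le₀ (mod_cast Nat.factorial_pos _) (by positivity)) h_card
    _ = unifPr fun xs : ι → Equiv.Perm α ↦ ∀ l ∈ U, xs l = z l := by
        rw [unifPr_forall_mem_eq, prod_const, Fintype.card_perm]
    _ ≤ unifPr fun xs : ι → Equiv.Perm α ↦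
          (¬ Function.Bijective fun i ↦ f i fun l ↦ xs l i) ∨ ∃ q, Bad xs q := unifPr_mono h_bad
    _ ≤ permDefect f + ∑ q : α × α, unifPr fun xs : ι → Equiv.Perm α ↦ Bad xs q :=
        (unifPr_or_le _ _).trans (by gcongr; exacts [le_rfl, unifPr_exists_le _])
    _ ≤ permDefect f + ∑ _q : α × α, η := by
        gcongr with q
        exact (unifPr_comp_of_uniform (unifPr_perm_apply_eq q.1)
          fun x ↦ ¬ (f q.1 x = q.2 ↔ G q.1 q.2 (x (k q.1 q.2)))).trans_le (hG q.1 q.2)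
    _ = permDefect f + Fintype.card α ^ 2 * η := by simp [sq]

lemma exists_unifPr_ne_le_of_small [Nonempty ι] (hα : 3 ≤ Fintype.card α) {f : α → (ι → α) → α}
    (h_small : permDefect f + Fintype.card α ^ 2 * (4 * √24 * Fintype.card α * √(permDefect f)) <
      (1 / (Fintype.card α).factorial : ℝ) ^ Fintype.card α ^ 2) :
    (∃ l, ∃ π : Equiv.Perm α, ∀ i, unifPr (fun x ↦ f i x ≠ π (x l)) ≤
      Fintype.card α * (4 * √24 * Fintype.card α * √(permDefect f))) ∨
      ∀ j, ∃ i, unifPr (fun x ↦ f i x ≠ j) ≤ 4 * √24 * Fintype.card α * √(permDefect f) := by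
  choose k G hG using exists_unifPr_not_iff_le hα f
  exact (isPermSystem_of_unifPr_not_iff_le hG h_small).exists_unifPr_ne_le hG

lemma exists_bijective_of_permDefect_lt_one {f : α → (ι → α) → α} (h : permDefect f < 1) :
    ∃ xs : ι → Equiv.Perm α, Function.Bijective fun i ↦ f i fun k ↦ xs k i := by
  by_contra h_not
  have h_one : permDefect f = 1 := by
    simp_rw [permDefect, not_exists.mp h_not, not_false_eq_true, unifPr_eq_expect]
    simp
  exact h.ne h_one

lemma exists_unifPr_ne_eq_zero_of_isEmpty [IsEmpty ι] {f : α → (ι → α) → α}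
    (h : permDefect f < 1) (j : α) : ∃ i, unifPr (fun x ↦ f i x ≠ j) = 0 := by
  obtain ⟨xs, h_bij⟩ := exists_bijective_of_permDefect_lt_one h
  obtain ⟨i, hi⟩ := h_bij.surjective j
  have h_eq (x : ι → α) : f i x = j := by rw [← hi, Subsingleton.elim x]
  exact ⟨i, by simp [unifPr, h_eq]⟩

/-- The constant of the stability theorem for permutations of `n` points. With `d` the defect of
`f`, `4 * √24 * n * √d` bounds the distance of the event `f i x = j` from a single-coordinate one,
and `n ! ^ n ^ 2` is the inverse of the probability that `n ^ 2` given coordinates take prescribed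
permutations as values. -/
noncomputable def stabilityConst (n : ℕ) : ℝ :=
  (1 + n ^ 2 * (4 * √24 * n)) * (n.factorial : ℝ) ^ n ^ 2

lemma one_le_stabilityConst (n : ℕ) : 1 ≤ stabilityConst n :=
  one_le_mul_of_one_le_of_one_le (le_add_of_nonneg_right (by positivity))
    (one_le_pow₀ (mod_cast Nat.factorial_pos n))

lemma pow_mul_le_stabilityConst {n m : ℕ} (hn : 0 < n) (hm : m ≤ 2) :
    n ^ m * (4 * √24 * n) ≤ stabilityConst n := by
  have h_pow : (n : ℝ) ^ m ≤ n ^ 2 := pow_le_pow_right₀ (mod_cast hn) hm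
  calc (n : ℝ) ^ m * (4 * √24 * n)
    _ ≤ 1 + n ^ 2 * (4 * √24 * n) :=
        (mul_le_mul_of_nonneg_right h_pow (by positivity)).trans (le_add_of_nonneg_left zero_le_one)
    _ ≤ stabilityConst n :=
        le_mul_of_one_le_right (by positivity) (one_le_pow₀ (mod_cast Nat.factorial_pos n))

lemma add_mul_sqrt_lt_of_stabilityConst_mul_sqrt_lt_one {n : ℕ} {d : ℝ} (hd : d < 1)
    (h : stabilityConst n * √d < 1) :
    d + n ^ 2 * (4 * √24 * n * √d) < (1 / n.factorial : ℝ) ^ n ^ 2 := by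
  have h_le_sqrt : d ≤ √d := by
    rcases le_or_gt d 0 with hd₀ | hd₀
    · exact hd₀.trans (Real.sqrt_nonneg d)
    · exact Real.le_sqrt_of_sq_le (by nlinarith)
  calc d + n ^ 2 * (4 * √24 * n * √d)
    _ ≤ (1 + n ^ 2 * (4 * √24 * n)) * √d := by linarith
    _ < (1 / n.factorial : ℝ) ^ n ^ 2 := by
        rw [div_pow, one_pow, lt_div_iff₀ (by positivity)]
        exact lt_of_eq_of_lt (by rw [stabilityConst]; ring) h

theorem exists_unifPr_ne_le_stabilityConst_mul (hα : 3 ≤ Fintype.card α) (f : α → (ι → α) → α) :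
    (∃ l, ∃ π : Equiv.Perm α, ∀ i, unifPr (fun x ↦ f i x ≠ π (x l)) ≤
      stabilityConst (Fintype.card α) * √(permDefect f)) ∨
      ∀ j, ∃ i, unifPr (fun x ↦ f i x ≠ j) ≤
        stabilityConst (Fintype.card α) * √(permDefect f) := by
  rcases le_or_gt 1 (stabilityConst (Fintype.card α) * √(permDefect f)) with h_large | h_lt
  · exact Or.inr fun j ↦ ⟨j, (unifPr_le_one _).trans h_large⟩
  have h_sqrt : √(permDefect f) ≤ stabilityConst (Fintype.card α) * √(permDefect f) :=
    le_mul_of_one_le_left (Real.sqrt_nonneg _) (one_le_stabilityConst _)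
  have h_defect : permDefect f < 1 := by
    simpa using (Real.sqrt_lt' one_pos).mp (h_sqrt.trans_lt h_lt)
  rcases isEmpty_or_nonempty ι with hι | hι
  · refine Or.inr fun j ↦ ?_
    obtain ⟨i, hi⟩ := exists_unifPr_ne_eq_zero_of_isEmpty h_defect j
    exact ⟨i, hi.trans_le ((Real.sqrt_nonneg _).trans h_sqrt)⟩
  have h_bound {m : ℕ} (hm : m ≤ 2) :
      (Fintype.card α : ℝ) ^ m * (4 * √24 * Fintype.card α * √(permDefect f)) ≤
        stabilityConst (Fintype.card α) * √(permDefect f) := by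
    rw [← mul_assoc]
    gcongr
    exact pow_mul_le_stabilityConst (by omega) hm
  refine (exists_unifPr_ne_le_of_small hα
    (add_mul_sqrt_lt_of_stabilityConst_mul_sqrt_lt_one h_defect h_lt)).imp ?_ ?_
  · rintro ⟨l, π, hπ⟩
    exact ⟨l, π, fun i ↦ (hπ i).trans (by simpa using h_bound one_le_two)⟩
  · intro h_const j
    obtain ⟨i, hi⟩ := h_const j
    exact ⟨i, hi.trans (by simpa using h_bound zero_le_two)⟩

end Stability

end PermPolymorphism

open PermPolymorphism in
theorem stmt8_general {α : Type*} [Fintype α] [DecidableEq α] (hα : 3 ≤ Fintype.card α) :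
    ∃ K > (0 : ℝ), ∀ (ι : Type*) [Fintype ι] [DecidableEq ι] (ε : ℝ)
      (f : α → (ι → α) → α),
      unifPr (fun xs : ι → Equiv.Perm α ↦ Function.Bijective fun i ↦ f i fun k ↦ xs k i) ≥ 1 - ε →
        (∃ k, ∃ π : Equiv.Perm α, ∀ i, unifPr (fun x ↦ f i x ≠ π (x k)) ≤ K * √ε) ∨
          ∀ j, ∃ i, unifPr (fun x ↦ f i x ≠ j) ≤ K * √ε := by
  have h_pos : 0 < stabilityConst (Fintype.card α) := one_pos.trans_le (one_le_stabilityConst _)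
  refine ⟨stabilityConst (Fintype.card α), h_pos, fun ι _ _ ε f hf ↦ ?_⟩
  have h_defect : permDefect f ≤ ε := by
    rw [permDefect, unifPr_not]
    linarith
  have h_bound : stabilityConst (Fintype.card α) * √(permDefect f) ≤
      stabilityConst (Fintype.card α) * √ε := by gcongr
  rcases exists_unifPr_ne_le_stabilityConst_mul hα f with ⟨k, π, hπ⟩ | h_const
  · exact Or.inl ⟨k, π, fun i ↦ (hπ i).trans h_bound⟩
  · refine Or.inr fun j ↦ ?_
    obtain ⟨i, hi⟩ := h_const j
    exact ⟨i, hi.trans h_bound⟩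

/-- stability theorem for approximate polymorphisms of `Perm_n`, `n ≥ 3`. -/
theorem stmt8 (n : ℕ) (hn : 3 ≤ n) :
    ∃ ε₀ > (0 : ℝ), ∃ K > (0 : ℝ), ∀ p : ℕ, ∀ ε : ℝ, 0 ≤ ε → ε < ε₀ →
      ∀ f : Fin n → (Fin p → Fin n) → Fin n,
        unifPr (fun xs : Fin p → Equiv.Perm (Fin n) =>
          Function.Bijective (fun i => f i (fun k => xs k i))) ≥ 1 - ε →
        ((∃ k : Fin p, ∃ π : Equiv.Perm (Fin n), ∀ i : Fin n,
            unifPr (fun x : Fin p → Fin n => f i x ≠ π (x k)) ≤ K * ε ^ ((1 : ℝ) / 4)) ∨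
         (∀ j : Fin n, ∃ i : Fin n,
            unifPr (fun x : Fin p → Fin n => f i x ≠ j) ≤ K * ε ^ ((1 : ℝ) / 4))) := by
  obtain ⟨K, hK, h⟩ := stmt8_general (α := Fin n) (by simpa using hn)
  refine ⟨1, one_pos, K, hK, fun p ε hε hε₁ f hf ↦ ?_⟩
  have h_root : K * √ε ≤ K * ε ^ ((1 : ℝ) / 4) := by
    rw [Real.sqrt_eq_rpow]
    gcongr ?_ * ?_
    exact Real.rpow_le_rpow_of_exponent_ge_of_imp hε hε₁.le (by norm_num) (by norm_num)
  exact (h (Fin p) ε f hf).imp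
    (fun ⟨k, π, hπ⟩ ↦ ⟨k, π, fun i ↦ (hπ i).trans h_root⟩)
    fun h_const j ↦ (h_const j).imp fun _ hi ↦ hi.trans h_root
end

section
/- If f_1,…,f_n : [n]^p → [n] are an ε-approximate polymorphism of Perm_n with respect to the uniform distribution, then for every i ≠ j in [n] and every r ∈ [n], the Boolean functions f_{i,r}, f_{j,r} : [n]^p → {0,1} defined by f_{i,r}(x) = 1{f_i(x) = r} and f_{j,r}(x) = 1{f_j(x) = r} are ε-cross-independent. -/
/-! If `i ≠ j` and `x` is a uniformly random permutation, then `(x i, x j)` is a uniformly random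
pair of distinct points, because the symmetric group is doubly transitive. So the probability to be
bounded is that of `f i` and `f j` both returning `r` on random permutations; whenever this happens,
the output tuple repeats `r` and is not a permutation. -/

section UniformProbability

variable {α β : Type*} [Fintype α] [Fintype β]

theorem unifPr_comp_equiv (e : α ≃ β) (P : β → Prop) :
    unifPr (fun a => P (e a)) = unifPr P := by
  unfold unifPr
  rw [Nat.card_congr (e.subtypeEquiv fun _ => Iff.rfl), Fintype.card_congr e]

theorem unifPr_prod (P : α × β → Prop) :
    unifPr P = (∑ a, unifPr fun b => P (a, b)) / Fintype.card α := by
  have card_eq_sum : Nat.card {q // P q} = ∑ a, Nat.card {b // P (a, b)} := by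
    rw [Nat.card_congr (Equiv.subtypeProdEquivSigmaSubtype fun a b => P (a, b)), Nat.card_sigma]
  unfold unifPr
  rw [card_eq_sum, ← Finset.sum_div, div_div, Fintype.card_prod, mul_comm (Fintype.card α)]
  push_cast
  rfl

theorem unifPr_prod_of_forall_eq [Nonempty α] (P : α × β → Prop) {c : ℝ}
    (h : ∀ a, unifPr (fun b => P (a, b)) = c) : unifPr P = c := by
  simp [unifPr_prod, h]

theorem unifPr_add_le_one_of_disjoint {P Q : α → Prop} (h : Disjoint P Q) :
    unifPr P + unifPr Q ≤ 1 := by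
  classical
  have card_add_le : Nat.card {a // P a} + Nat.card {a // Q a} ≤ Fintype.card α := by
    rw [← Nat.card_sum, ← Nat.card_congr (subtypeOrEquiv P Q h), ← Nat.card_eq_fintype_card]
    exact Finite.card_subtype_le _
  unfold unifPr
  rw [← add_div]
  exact div_le_one_of_le₀ (mod_cast card_add_le) (Nat.cast_nonneg _)

end UniformProbability

section GroupAction

open MulAction

variable {G X : Type*} [Group G] [Fintype G] [MulAction G X]

theorem unifPr_smul_eq_unifPr_smul [IsPretransitive G X] (P : X → Prop) (x y : X) :
    unifPr (fun g : G => P (g • x)) = unifPr (fun g : G => P (g • y)) := by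
  obtain ⟨k, rfl⟩ := exists_smul_eq G x y
  simpa only [smul_smul, Equiv.coe_mulRight] using
    (unifPr_comp_equiv (Equiv.mulRight k) fun g : G => P (g • x)).symm

-- Both sides equal the probability of `P (g • y)` for `g` and `y` independent and uniform.
theorem unifPr_smul [Fintype X] [IsPretransitive G X] (P : X → Prop) (x : X) :
    unifPr (fun g : G => P (g • x)) = unifPr P := by
  have : Nonempty X := ⟨x⟩
  calc unifPr (fun g : G => P (g • x))
      = unifPr (fun q : X × G => P (q.2 • q.1)) :=
        (unifPr_prod_of_forall_eq (fun q : X × G => P (q.2 • q.1)) fun y =>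
          unifPr_smul_eq_unifPr_smul P y x).symm
    _ = unifPr (fun q : G × X => P (q.1 • q.2)) :=
        unifPr_comp_equiv (Equiv.prodComm X G) fun q : G × X => P (q.1 • q.2)
    _ = unifPr P :=
        unifPr_prod_of_forall_eq _ fun g => unifPr_comp_equiv (toPerm g) P

theorem isPretransitive_pi {κ : Type*} {H Y : κ → Type*} [∀ k, Group (H k)]
    [∀ k, MulAction (H k) (Y k)] [∀ k, IsPretransitive (H k) (Y k)] :
    IsPretransitive (∀ k, H k) (∀ k, Y k) where
  exists_smul_eq x y := by
    choose g hg using fun k => exists_smul_eq (H k) (x k) (y k)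
    exact ⟨g, funext hg⟩

variable {κ : Type*} [Fintype κ] [DecidableEq κ] [Fintype X] [DecidableEq X]
  [IsMultiplyPretransitive G X 2]

theorem unifPr_smul_pair {i j : X} (hij : i ≠ j) (P : (κ → {q : X × X // q.1 ≠ q.2}) → Prop) :
    unifPr (fun g : κ → G =>
      P fun k => ⟨(g k • i, g k • j), (MulAction.injective (g k)).ne hij⟩) = unifPr P := by
  let toPairs : (κ → Fin 2 ↪ X) ≃ (κ → {q : X × X // q.1 ≠ q.2}) :=
    Equiv.piCongrRight fun _ => Function.Embedding.twoEmbeddingEquiv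
  have : IsPretransitive (κ → G) (κ → Fin 2 ↪ X) := isPretransitive_pi
  rw [← unifPr_comp_equiv toPairs P,
    ← unifPr_smul (G := κ → G) _ fun _ => Function.Embedding.embFinTwo hij]
  rfl

theorem stmt9_general {β : Type*} {ε : ℝ} (f : X → (κ → X) → β)
    (happrox : 1 - ε ≤ unifPr fun g : κ → G => Function.Injective fun i => f i fun k => g k • i)
    {i j : X} (hij : i ≠ j) (r : β) :
    unifPr (fun w : κ → {q : X × X // q.1 ≠ q.2} =>
      f i (fun k => (w k).val.1) = r ∧ f j (fun k => (w k).val.2) = r) ≤ ε := by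
  rw [← unifPr_smul_pair (G := G) hij]
  have collision_disjoint : Disjoint
      (fun g : κ → G => Function.Injective fun i => f i fun k => g k • i)
      (fun g : κ → G => f i (fun k => g k • i) = r ∧ f j (fun k => g k • j) = r) :=
    Pi.disjoint_iff.mpr fun _ => Prop.disjoint_iff.mpr <| not_and.mpr fun hinj hr =>
      hij (hinj (hr.1.trans hr.2.symm))
  linarith [unifPr_add_le_one_of_disjoint collision_disjoint]

end GroupAction

/-- an ε-approximate polymorphism of `Perm_n` yields ε-cross-independent
indicator functions `f_{i,r}, f_{j,r}` for all `i ≠ j` and `r`. -/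
theorem stmt9 (n p : ℕ) (ε : ℝ)
    (f : Fin n → (Fin p → Fin n) → Fin n)
    (happrox : unifPr (fun xs : Fin p → Equiv.Perm (Fin n) =>
      Function.Bijective (fun i => f i (fun k => xs k i))) ≥ 1 - ε) :
    ∀ i j : Fin n, i ≠ j → ∀ r : Fin n,
      unifPr (fun w : Fin p → {q : Fin n × Fin n // q.1 ≠ q.2} =>
        f i (fun k => (w k).val.1) = r ∧ f j (fun k => (w k).val.2) = r) ≤ ε := by
  have := Equiv.Perm.isMultiplyPretransitive (Fin n) 2
  exact fun i j hij r => stmt9_general (G := Equiv.Perm (Fin n)) f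
    (by simpa only [Finite.injective_iff_bijective, Equiv.Perm.smul_def] using happrox) hij r
end

section
/- Let n ≥ 3. There exists a constant K > 0 (depending only on n) such that the following holds for every p and every ε ≥ 0: if g, h : [n]^p → {0,1} are ε-cross-independent, then n(n − 2) · μ(g) · μ(h) ≤ 1 − μ(g) − μ(h) + K·√ε. -/
/-! Put `n = |α|` and let `(y, z)` be a uniform pair of distinct elements of `α`. The covariance of
`f y` and `g z` is that of `f` and `g` under the uniform distribution, multiplied by `-1 / (n - 1)`,
so `y` and `z` have maximal correlation at most `1 / (n - 1)`. Maximal correlation does not grow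
when independent copies are taken (Witsenhausen), by the law of total covariance. For events of
probabilities `a` and `b` with joint probability `B` this gives
`(n - 1)² (B - a b)² ≤ a (1 - a) b (1 - b)`. Dropping `B²` and dividing by `a b` leaves
`(n - 1)² a b ≤ (1 - a) (1 - b) + 2 (n - 1)² B`, an error linear in `B`. -/

open Finset
open scoped BigOperators

section Covariance

variable {Ω Ω' : Type*} [Fintype Ω] [Fintype Ω']

/-- Covariance of two real random variables on a finite type with the uniform distribution;
`unifCov X X` is the variance of `X`. -/
noncomputable def unifCov (X Y : Ω → ℝ) : ℝ :=
  𝔼 ω, X ω * Y ω - (𝔼 ω, X ω) * 𝔼 ω, Y ω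

theorem unifCov_self_nonneg (X : Ω → ℝ) : 0 ≤ unifCov X X := by
  rcases isEmpty_or_nonempty Ω with _ | _
  · simp [unifCov]
  · have cauchy_schwarz := expect_mul_sq_le_sq_mul_sq univ X 1
    simp only [Pi.one_apply, mul_one, one_pow, Fintype.expect_one] at cauchy_schwarz
    rw [unifCov, sub_nonneg]
    simpa only [sq] using cauchy_schwarz

theorem unifCov_const_mul_left (c : ℝ) (X Y : Ω → ℝ) :
    unifCov (fun ω => c * X ω) Y = c * unifCov X Y := by
  simp only [unifCov, mul_assoc, ← mul_expect, mul_sub]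

theorem unifCov_const_mul_self (c : ℝ) (X : Ω → ℝ) :
    unifCov (fun ω => c * X ω) (fun ω => c * X ω) = c * c * unifCov X X := by
  simp only [unifCov, mul_mul_mul_comm c, ← mul_expect, mul_sub]

theorem unifCov_add_self (X Y : Ω → ℝ) :
    unifCov (X + Y) (X + Y) = unifCov X X + 2 * unifCov X Y + unifCov Y Y := by
  simp only [unifCov, Pi.add_apply, add_mul, mul_add, expect_add_distrib,
    mul_comm (Y _) (X _)]
  ring

theorem neg_unifCov_le (X Y : Ω → ℝ) :
    -unifCov X Y ≤ (unifCov X X + unifCov Y Y) / 2 := by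
  have := unifCov_self_nonneg (X + Y)
  rw [unifCov_add_self] at this
  linarith

theorem unifCov_comp_equiv (e : Ω' ≃ Ω) (X Y : Ω → ℝ) :
    unifCov (X ∘ e) (Y ∘ e) = unifCov X Y := by
  simp only [unifCov, Function.comp_apply, Fintype.expect_equiv e (fun ω => X (e ω)) X fun _ => rfl,
    Fintype.expect_equiv e (fun ω => Y (e ω)) Y fun _ => rfl,
    Fintype.expect_equiv e (fun ω => X (e ω) * Y (e ω)) (fun ω => X ω * Y ω) fun _ => rfl]

theorem unifCov_of_unique [Unique Ω] (X Y : Ω → ℝ) : unifCov X Y = 0 := by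
  simp [unifCov]

theorem unifCov_prod (X Y : Ω × Ω' → ℝ) :
    unifCov X Y = 𝔼 ω, unifCov (fun ω' => X (ω, ω')) (fun ω' => Y (ω, ω')) +
      unifCov (fun ω => 𝔼 ω', X (ω, ω')) (fun ω => 𝔼 ω', Y (ω, ω')) := by
  simp only [unifCov, expect_sub_distrib, ← univ_product_univ, expect_product]
  ring

end Covariance

section MaximalCorrelation

variable {Ω Ω' α α' β β' : Type*} [Fintype Ω] [Fintype Ω'] {X : Ω → α} {Y : Ω → β}
  {X' : Ω' → α'} {Y' : Ω' → β'} {ρ : ℝ}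

/-- The random variables `X` and `Y` on the uniform space `Ω` have maximal correlation at most `ρ`.
The bound is by `ρ` times the arithmetic mean of the two variances instead of their geometric mean:
for `0 ≤ ρ` this is equivalent, by rescaling `f`, and being additive in the variances it passes to
products through the law of total covariance. -/
def MaxCorrLE (X : Ω → α) (Y : Ω → β) (ρ : ℝ) : Prop :=
  ∀ (f : α → ℝ) (g : β → ℝ),
    unifCov (f ∘ X) (g ∘ Y) ≤ ρ / 2 * (unifCov (f ∘ X) (f ∘ X) + unifCov (g ∘ Y) (g ∘ Y))

namespace MaxCorrLE

theorem sq_unifCov_le (hXY : MaxCorrLE X Y ρ) (f : α → ℝ) (g : β → ℝ) :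
    unifCov (f ∘ X) (g ∘ Y) ^ 2 ≤
      ρ ^ 2 * (unifCov (f ∘ X) (f ∘ X) * unifCov (g ∘ Y) (g ∘ Y)) := by
  have quadratic_nonneg (t : ℝ) :
      0 ≤ ρ / 2 * unifCov (f ∘ X) (f ∘ X) * (t * t) + -unifCov (f ∘ X) (g ∘ Y) * t +
        ρ / 2 * unifCov (g ∘ Y) (g ∘ Y) := by
    have scaled := hXY (fun a => t * f a) g
    simp only [Function.comp_def, unifCov_const_mul_self] at scaled ⊢
    rw [unifCov_const_mul_left] at scaled
    linarith
  have := discrim_le_zero quadratic_nonneg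
  rw [discrim] at this
  linarith

theorem comp (hXY : MaxCorrLE X Y ρ) (u : α → α') (v : β → β') :
    MaxCorrLE (u ∘ X) (v ∘ Y) ρ :=
  fun f g => hXY (f ∘ u) (g ∘ v)

theorem comp_equiv (hXY : MaxCorrLE X Y ρ) (e : Ω' ≃ Ω) : MaxCorrLE (X ∘ e) (Y ∘ e) ρ := by
  intro f g
  simpa only [← Function.comp_assoc, unifCov_comp_equiv] using hXY f g

theorem of_unique [Unique Ω] (X : Ω → α) (Y : Ω → β) (ρ : ℝ) : MaxCorrLE X Y ρ := by
  intro f g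
  simp only [unifCov_of_unique, add_zero, mul_zero, le_refl]

theorem prodMap (hXY : MaxCorrLE X Y ρ) (hXY' : MaxCorrLE X' Y' ρ) :
    MaxCorrLE (Prod.map X X') (Prod.map Y Y') ρ := by
  intro f g
  have fiberwise := expect_le_expect fun ω (_ : ω ∈ univ) =>
    hXY' (fun a => f (X ω, a)) (fun b => g (Y ω, b))
  have means := hXY (fun a => 𝔼 ω', f (a, X' ω')) (fun b => 𝔼 ω', g (b, Y' ω'))
  simp only [← mul_expect, expect_add_distrib, Function.comp_def] at fiberwise means
  simp only [unifCov_prod, Function.comp_def, Prod.map_apply]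
  linarith

theorem pi_fin (hXY : MaxCorrLE X Y ρ) (p : ℕ) :
    MaxCorrLE (fun w : Fin p → Ω => X ∘ w) (fun w => Y ∘ w) ρ := by
  induction p with
  | zero => exact of_unique _ _ _
  | succ p ih =>
    convert ((hXY.prodMap ih).comp_equiv (Fin.consEquiv fun _ => Ω).symm).comp
      (Fin.consEquiv fun _ => α) (Fin.consEquiv fun _ => β) using 1 <;>
    · ext w i
      cases i using Fin.cases <;> rfl

theorem pi {ι : Type*} [Fintype ι] [DecidableEq ι] (hXY : MaxCorrLE X Y ρ) :
    MaxCorrLE (fun w : ι → Ω => X ∘ w) (fun w => Y ∘ w) ρ := by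
  let e := Fintype.equivFin ι
  convert ((hXY.pi_fin _).comp_equiv (e.arrowCongr (Equiv.refl Ω))).comp (· ∘ e) (· ∘ e)
    using 1 <;>
  · ext w i
    simp

end MaxCorrLE

end MaximalCorrelation

section UniformFibers

variable {Ω α : Type*} [Fintype Ω] [DecidableEq α] {X : Ω → α} {c : ℝ}

theorem expect_comp_of_card_fiber_eq [Fintype α] (hc : c ≠ 0) (hX : ∀ a, (#{ω | X ω = a} : ℝ) = c)
    (f : α → ℝ) : 𝔼 ω, f (X ω) = 𝔼 a, f a := by
  have sum_comp (k : α → ℝ) : ∑ ω, k (X ω) = c * ∑ a, k a := by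
    rw [← sum_fiberwise_of_maps_to' (fun ω _ => mem_univ (X ω)), mul_sum]
    simp only [sum_const, nsmul_eq_mul, hX]
  have card_eq : (Fintype.card Ω : ℝ) = c * Fintype.card α := by
    simpa using sum_comp 1
  rw [Fintype.expect_eq_sum_div_card, Fintype.expect_eq_sum_div_card, sum_comp, card_eq,
    mul_div_mul_left _ _ hc]

theorem card_fiber_pi {ι : Type*} [Fintype ι] [DecidableEq ι]
    (hX : ∀ a, (#{ω | X ω = a} : ℝ) = c) (x : ι → α) :
    (#{w : ι → Ω | X ∘ w = x} : ℝ) = c ^ Fintype.card ι := by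
  have fiber_eq : ({w | X ∘ w = x} : Finset (ι → Ω)) =
      Fintype.piFinset fun i => {ω | X ω = x i} := by
    ext w
    simp [funext_iff]
  simp [fiber_eq, hX]

end UniformFibers

section DistinctPairs

theorem card_sub_one_pos (α : Type*) [Fintype α] [Nontrivial α] : (0 : ℝ) < Fintype.card α - 1 :=
  sub_pos.2 (Nat.one_lt_cast.2 Fintype.one_lt_card)

variable {α : Type*} [Fintype α] [DecidableEq α]

variable (α) in
/-- Ordered pairs of distinct elements of `α`, the sample space of one coordinate of the random pair
in the definition of cross-independence. -/
abbrev DistinctPair : Type _ := {q : α × α // q.1 ≠ q.2}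

theorem sum_distinctPair (F : α → α → ℝ) :
    ∑ q : DistinctPair α, F q.1.1 q.1.2 = ∑ a, ∑ b, F a b - ∑ a, F a a := by
  have offDiag : ∑ q : DistinctPair α, F q.1.1 q.1.2 = ∑ q ∈ univ.offDiag, F q.1 q.2 :=
    (sum_subtype univ.offDiag (by simp) (fun q : α × α => F q.1 q.2)).symm
  rw [offDiag, eq_sub_iff_add_eq', ← sum_diag univ (fun q : α × α => F q.1 q.2),
    ← sum_union (disjoint_diag_offDiag _), diag_union_offDiag, sum_product]

theorem card_distinctPair :
    (Fintype.card (DistinctPair α) : ℝ) = Fintype.card α * (Fintype.card α - 1) := by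
  have := sum_distinctPair (fun _ _ : α => 1)
  simp only [sum_const, card_univ, nsmul_eq_mul, mul_one] at this
  linarith

theorem card_fiber_distinctPair_fst (a : α) :
    (#{q : DistinctPair α | q.1.1 = a} : ℝ) = Fintype.card α - 1 := by
  simpa using sum_distinctPair fun x _ => if x = a then 1 else 0

theorem card_fiber_distinctPair_snd (a : α) :
    (#{q : DistinctPair α | q.1.2 = a} : ℝ) = Fintype.card α - 1 := by
  simpa using sum_distinctPair fun _ y => if y = a then 1 else 0

variable [Nontrivial α]

theorem expect_distinctPair_mul (f g : α → ℝ) :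
    𝔼 q : DistinctPair α, f q.1.1 * g q.1.2 =
      (Fintype.card α * ((𝔼 a, f a) * 𝔼 a, g a) - 𝔼 a, f a * g a) / (Fintype.card α - 1) := by
  have := (card_sub_one_pos α).ne'
  rw [Fintype.expect_eq_sum_div_card, sum_distinctPair fun a b => f a * g b, card_distinctPair,
    ← Fintype.sum_mul_sum]
  simp only [Fintype.expect_eq_sum_div_card]
  field_simp

theorem unifCov_distinctPair (f g : α → ℝ) :
    unifCov (fun q : DistinctPair α => f q.1.1) (fun q => g q.1.2) =
      -unifCov f g / (Fintype.card α - 1) := by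
  have := (card_sub_one_pos α).ne'
  rw [unifCov, expect_distinctPair_mul,
    expect_comp_of_card_fiber_eq this card_fiber_distinctPair_fst,
    expect_comp_of_card_fiber_eq this card_fiber_distinctPair_snd, unifCov]
  field_simp
  ring

theorem maxCorrLE_distinctPair :
    MaxCorrLE (fun q : DistinctPair α => q.1.1) (fun q => q.1.2) (1 / (Fintype.card α - 1)) := by
  intro f g
  have card_pos := card_sub_one_pos α
  have var_fst : unifCov (fun q : DistinctPair α => f q.1.1) (fun q => f q.1.1) = unifCov f f := by
    simp only [unifCov, expect_comp_of_card_fiber_eq card_pos.ne' card_fiber_distinctPair_fst,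
      expect_comp_of_card_fiber_eq card_pos.ne' card_fiber_distinctPair_fst fun a => f a * f a]
  have var_snd : unifCov (fun q : DistinctPair α => g q.1.2) (fun q => g q.1.2) = unifCov g g := by
    simp only [unifCov, expect_comp_of_card_fiber_eq card_pos.ne' card_fiber_distinctPair_snd,
      expect_comp_of_card_fiber_eq card_pos.ne' card_fiber_distinctPair_snd fun a => g a * g a]
  simp only [Function.comp_def]
  rw [unifCov_distinctPair, var_fst, var_snd, div_le_iff₀ card_pos]
  refine (neg_unifCov_le f g).trans_eq ?_
  field_simp

end DistinctPairs

section Events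

variable {Ω : Type*} [Fintype Ω]

theorem unifPr_eq_expect (P : Ω → Prop) [DecidablePred P] :
    unifPr P = 𝔼 ω, if P ω then (1 : ℝ) else 0 := by
  rw [unifPr, Fintype.expect_eq_sum_div_card, Nat.card_eq_fintype_card, Fintype.card_subtype,
    sum_boole]

theorem unifPr_nonneg (P : Ω → Prop) : 0 ≤ unifPr P := by
  unfold unifPr
  positivity

theorem unifPr_le_one (P : Ω → Prop) : unifPr P ≤ 1 := by
  classical
  rw [unifPr, Nat.card_eq_fintype_card]
  exact div_le_one_of_le₀ (mod_cast Fintype.card_subtype_le P) (Nat.cast_nonneg _)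

theorem unifPr_le_sqrt (P : Ω → Prop) {ε : ℝ} (hP : unifPr P ≤ ε) : unifPr P ≤ √ε :=
  Real.le_sqrt_of_sq_le <|
    (pow_le_of_le_one (unifPr_nonneg P) (unifPr_le_one P) two_ne_zero).trans hP

theorem unifCov_boole (P Q : Ω → Prop) [DecidablePred P] [DecidablePred Q] :
    unifCov (fun ω => if P ω then (1 : ℝ) else 0) (fun ω => if Q ω then 1 else 0) =
      unifPr (fun ω => P ω ∧ Q ω) - unifPr P * unifPr Q := by
  simp only [unifCov, unifPr_eq_expect, ite_zero_mul_ite_zero, mul_one]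

theorem unifPr_comp_of_card_fiber_eq {α : Type*} [Fintype α] [DecidableEq α] {X : Ω → α} {c : ℝ}
    (hc : c ≠ 0) (hX : ∀ a, (#{ω | X ω = a} : ℝ) = c) (P : α → Prop) :
    unifPr (fun ω => P (X ω)) = unifPr P := by
  classical
  simp only [unifPr_eq_expect]
  exact expect_comp_of_card_fiber_eq hc hX fun a => if P a then (1 : ℝ) else 0

theorem MaxCorrLE.sq_unifPr_sub_le {α β : Type*} {X : Ω → α} {Y : Ω → β} {ρ : ℝ}
    (hXY : MaxCorrLE X Y ρ) (P : α → Prop) (Q : β → Prop) :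
    (unifPr (fun ω => P (X ω) ∧ Q (Y ω)) -
        unifPr (fun ω => P (X ω)) * unifPr fun ω => Q (Y ω)) ^ 2 ≤
      ρ ^ 2 * ((unifPr (fun ω => P (X ω)) - unifPr (fun ω => P (X ω)) ^ 2) *
        (unifPr (fun ω => Q (Y ω)) - unifPr (fun ω => Q (Y ω)) ^ 2)) := by
  classical
  have := hXY.sq_unifCov_le (fun a => if P a then 1 else 0) (fun b => if Q b then 1 else 0)
  simpa only [Function.comp_def, unifCov_boole, and_self, ← sq] using this

end Events

theorem sq_mul_le_of_sq_sub_le {a b B c : ℝ} (ha : a ∈ Set.Icc 0 1) (hb : b ∈ Set.Icc 0 1)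
    (hB : 0 ≤ B) (h : c ^ 2 * (B - a * b) ^ 2 ≤ (a - a ^ 2) * (b - b ^ 2)) :
    c ^ 2 * (a * b) ≤ (1 - a) * (1 - b) + 2 * c ^ 2 * B := by
  have one_sub_mul_nonneg : 0 ≤ (1 - a) * (1 - b) :=
    mul_nonneg (sub_nonneg.2 ha.2) (sub_nonneg.2 hb.2)
  rcases (mul_nonneg ha.1 hb.1).eq_or_lt with hab | hab
  · rw [← hab, mul_zero]
    positivity
  · refine le_of_mul_le_mul_left ?_ hab
    have : 0 ≤ c ^ 2 * B ^ 2 := by positivity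
    linarith

theorem sq_card_sub_one_mul_le {ι α : Type*} [Fintype ι] [DecidableEq ι] [Fintype α]
    [DecidableEq α] [Nontrivial α] (P Q : (ι → α) → Prop) :
    ((Fintype.card α : ℝ) - 1) ^ 2 * (unifPr P * unifPr Q) ≤
      (1 - unifPr P) * (1 - unifPr Q) + 2 * ((Fintype.card α : ℝ) - 1) ^ 2 *
        unifPr fun w : ι → DistinctPair α =>
          P (fun k => (w k).1.1) ∧ Q (fun k => (w k).1.2) := by
  have card_pos := card_sub_one_pos α
  have correlation := maxCorrLE_distinctPair.pi.sq_unifPr_sub_le P Q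
  have fiber_card_ne_zero := pow_ne_zero (Fintype.card ι) card_pos.ne'
  rw [unifPr_comp_of_card_fiber_eq fiber_card_ne_zero (card_fiber_pi card_fiber_distinctPair_fst),
    unifPr_comp_of_card_fiber_eq fiber_card_ne_zero (card_fiber_pi card_fiber_distinctPair_snd),
    one_div, inv_pow, le_inv_mul_iff₀ (by positivity)] at correlation
  exact sq_mul_le_of_sq_sub_le ⟨unifPr_nonneg P, unifPr_le_one P⟩
    ⟨unifPr_nonneg Q, unifPr_le_one Q⟩ (unifPr_nonneg _) correlation

theorem stmt12_general {ι α : Type*} [Fintype ι] [DecidableEq ι] [Fintype α] [DecidableEq α]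
    [Nontrivial α] (P Q : (ι → α) → Prop) {ε : ℝ}
    (hPQ : unifPr (fun w : ι → {q : α × α // q.1 ≠ q.2} =>
      P (fun k => (w k).val.1) ∧ Q (fun k => (w k).val.2)) ≤ ε) :
    (Fintype.card α : ℝ) * ((Fintype.card α : ℝ) - 2) * unifPr P * unifPr Q ≤
      1 - unifPr P - unifPr Q + 2 * ((Fintype.card α : ℝ) - 1) ^ 2 * ε := by
  have := mul_le_mul_of_nonneg_left hPQ
    (by positivity : 0 ≤ 2 * ((Fintype.card α : ℝ) - 1) ^ 2)
  linarith [sq_card_sub_one_mul_le P Q]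

/-- approximate version of the cross-independence upper bound. -/
theorem stmt12 (n : ℕ) (hn : 3 ≤ n) :
    ∃ K > (0 : ℝ), ∀ p : ℕ, ∀ ε : ℝ, 0 ≤ ε →
      ∀ g h : (Fin p → Fin n) → Bool,
        unifPr (fun w : Fin p → {q : Fin n × Fin n // q.1 ≠ q.2} =>
          g (fun k => (w k).val.1) = true ∧ h (fun k => (w k).val.2) = true) ≤ ε →
        (n : ℝ) * ((n : ℝ) - 2) * unifPr (fun x => g x = true)
            * unifPr (fun x => h x = true)
          ≤ 1 - unifPr (fun x => g x = true) - unifPr (fun x => h x = true)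
            + K * Real.sqrt ε := by
  have : Nontrivial (Fin n) := Fin.nontrivial_iff_two_le.2 (by omega)
  exact ⟨2 * ((n : ℝ) - 1) ^ 2, by simpa using pow_pos (card_sub_one_pos (Fin n)) 2,
    fun p ε _ g h hgh => by
      simpa only [Fintype.card_fin] using
        stmt12_general (fun x => g x = true) (fun x => h x = true) (unifPr_le_sqrt _ hgh)⟩
end

section
/- Let m ≥ 3. If the functions (f_{{i,j}})_{i<j}, with f_{{i,j}} : {0,1}^p → {0,1}, constitute a polymorphism of Equiv_m, then there exists an equivalence relation ∼ on [m] such that: (a) if i ≁ j then f_{{i,j}} is the constant 0 function; and (b) for every equivalence class A of ∼ with |A| ≥ 3 there exists a set S ⊆ [p] such that f_{{i,j}}(x) = ⋀_{s ∈ S} x_s for all distinct i, j ∈ A and all x ∈ {0,1}^p. -/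
/-- The index set `E_m` of unordered pairs of distinct elements of `[m]`, encoded as
ordered pairs `(i,j)` with `i < j`. -/
abbrev PairIdx (m : ℕ) := {q : Fin m × Fin m // q.1 < q.2}

/-- Look up the coordinate of `x` at the unordered pair `{i,j}` (junk value `false`
if `i = j`). -/
def pget {m : ℕ} (x : PairIdx m → Bool) (i j : Fin m) : Bool :=
  if h : i < j then x ⟨(i, j), h⟩ else if h' : j < i then x ⟨(j, i), h'⟩ else false

/-- The predicate `Equiv_m`: the vector encodes a relation closed under transitivity. -/
def IsEquivVec {m : ℕ} (x : PairIdx m → Bool) : Prop :=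
  ∀ i j k : Fin m, i ≠ j → j ≠ k → i ≠ k →
    pget x i j = true → pget x j k = true → pget x i k = true

/-!
Prescribing the restriction of an equivalence relation to a triangle `{i, j, k}`, coordinate by
coordinate, is possible as soon as no coordinate gets exactly two of the three edges. Identify
`f_e` with the family `F e` of those `X ⊆ [p]` whose indicator vector it accepts. Two choices of
triangles suffice:

* `(X, Y, X ∩ Y)` shows that `X ∈ F {i, j}` and `Y ∈ F {j, k}` imply `X ∩ Y ∈ F {i, k}`;
* `(X, X, Z)` with `X ⊆ Z` shows that `X ∈ F {i, j} ∩ F {j, k}` implies `Z ∈ F {i, k}`.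

By the first, `F e ≠ ∅` defines an equivalence relation. Together they make the three families on
a triangle with nonempty families coincide, and their common value is then closed under
intersections and supersets, that is, a filter. Filters on a finite set are principal, which
gives the conjunctions.
-/

section Polymorphism

variable {V ι : Type*} {F : Sym2 V → Set (Set ι)} {i j k l : V} {X Y Z : Set ι}

/-- The polymorphisms of the equivalence relations on an arbitrary vertex set `V`, of arbitrary
arity `ι`. The function at the edge `e` is encoded by the family `F e` of the sets of coordinates
whose indicator vector it maps to `1`; the values of `F` on the diagonal are irrelevant. -/
def IsEquivPolymorphism (F : Sym2 V → Set (Set ι)) : Prop :=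
  ∀ (r : ι → Setoid V) (i j k : V), i ≠ j → j ≠ k → i ≠ k →
    {t | r t i j} ∈ F s(i, j) → {t | r t j k} ∈ F s(j, k) → {t | r t i k} ∈ F s(i, k)

theorem exists_setoid_family_of_triangle (hij : i ≠ j) (hjk : j ≠ k) (hik : i ≠ k)
    (hXY : X ∩ Y ⊆ Z) (hYZ : Y ∩ Z ⊆ X) (hXZ : X ∩ Z ⊆ Y) :
    ∃ r : ι → Setoid V, {t | r t i j} = X ∧ {t | r t j k} = Y ∧ {t | r t i k} = Z := by
  classical
  -- At coordinate `t`, every vertex is sent to a representative of its prescribed class.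
  refine ⟨fun t ↦ Setoid.ker fun v ↦
    if v = j ∧ t ∈ X then i else if v = k ∧ t ∈ Z then i else if v = k ∧ t ∈ Y then j else v,
    ?_, ?_, ?_⟩ <;>
  · ext t
    have hXYt : t ∈ X → t ∈ Y → t ∈ Z := fun hX hY ↦ hXY ⟨hX, hY⟩
    have hYZt : t ∈ Y → t ∈ Z → t ∈ X := fun hY hZ ↦ hYZ ⟨hY, hZ⟩
    have hXZt : t ∈ X → t ∈ Z → t ∈ Y := fun hX hZ ↦ hXZ ⟨hX, hZ⟩
    simp only [Set.mem_ofPred_eq, Setoid.ker_def]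
    grind

namespace IsEquivPolymorphism

theorem mem_of_triangle (hF : IsEquivPolymorphism F) (hij : i ≠ j) (hjk : j ≠ k) (hik : i ≠ k)
    (hX : X ∈ F s(i, j)) (hY : Y ∈ F s(j, k))
    (hXY : X ∩ Y ⊆ Z) (hYZ : Y ∩ Z ⊆ X) (hXZ : X ∩ Z ⊆ Y) : Z ∈ F s(i, k) := by
  obtain ⟨r, rfl, rfl, rfl⟩ := exists_setoid_family_of_triangle hij hjk hik hXY hYZ hXZ
  exact hF r i j k hij hjk hik hX hY

theorem inter_mem (hF : IsEquivPolymorphism F) (hij : i ≠ j) (hjk : j ≠ k) (hik : i ≠ k)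
    (hX : X ∈ F s(i, j)) (hY : Y ∈ F s(j, k)) : X ∩ Y ∈ F s(i, k) :=
  hF.mem_of_triangle hij hjk hik hX hY subset_rfl (fun _ h ↦ h.2.1) (fun _ h ↦ h.2.2)

theorem mem_of_subset (hF : IsEquivPolymorphism F) (hij : i ≠ j) (hjk : j ≠ k) (hik : i ≠ k)
    (hX : X ∈ F s(i, j)) (hX' : X ∈ F s(j, k)) (hXZ : X ⊆ Z) : Z ∈ F s(i, k) :=
  hF.mem_of_triangle hij hjk hik hX hX' (Set.inter_subset_left.trans hXZ)
    Set.inter_subset_left Set.inter_subset_left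

theorem mem_of_nonempty (hF : IsEquivPolymorphism F) (hij : i ≠ j) (hjk : j ≠ k) (hik : i ≠ k)
    (hX : X ∈ F s(i, j)) (hne : (F s(j, k)).Nonempty) : X ∈ F s(i, k) := by
  obtain ⟨Y, hY⟩ := hne
  have hI_ik : X ∩ Y ∈ F s(i, k) := hF.inter_mem hij hjk hik hX hY
  have hI_jk : X ∩ Y ∈ F s(j, k) := by
    rw [← Set.inter_eq_right.mpr (Set.inter_subset_left : X ∩ Y ⊆ X)]
    exact hF.inter_mem hij.symm hik hjk (Sym2.eq_swap ▸ hX) hI_ik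
  have hI_ij : X ∩ Y ∈ F s(i, j) := by
    rw [← Set.inter_self (X ∩ Y)]
    exact hF.inter_mem hik hjk.symm hij hI_ik (Sym2.eq_swap ▸ hI_jk)
  exact hF.mem_of_subset hij hjk hik hI_ij hI_jk Set.inter_subset_left

theorem subset_of_nonempty (hF : IsEquivPolymorphism F)
    (hij : i ≠ j) (hjk : j ≠ k) (hik : i ≠ k) (hne : (F s(j, k)).Nonempty) :
    F s(i, j) ⊆ F s(j, k) := by
  intro X hX
  have hX_ki : X ∈ F s(k, i) := Sym2.eq_swap ▸ hF.mem_of_nonempty hij hjk hik hX hne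
  rw [Sym2.eq_swap]
  exact hF.mem_of_nonempty hik.symm hij hjk.symm hX_ki ⟨X, hX⟩

theorem eq_of_nonempty (hF : IsEquivPolymorphism F) (hij : i ≠ j) (hjk : j ≠ k) (hik : i ≠ k)
    (hne : (F s(i, j)).Nonempty) (hne' : (F s(j, k)).Nonempty) : F s(i, j) = F s(j, k) := by
  refine (hF.subset_of_nonempty hij hjk hik hne').antisymm ?_
  rw [@Sym2.eq_swap _ i j] at hne ⊢
  rw [@Sym2.eq_swap _ j k]
  exact hF.subset_of_nonempty hjk.symm hij.symm hik.symm hne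

theorem exists_filter_sets_eq (hF : IsEquivPolymorphism F)
    (hij : i ≠ j) (hjk : j ≠ k) (hik : i ≠ k)
    (hne : (F s(i, j)).Nonempty) (hne' : (F s(j, k)).Nonempty) :
    ∃ l : Filter ι, l.sets = F s(i, j) := by
  have h_jk : F s(i, j) = F s(j, k) := hF.eq_of_nonempty hij hjk hik hne hne'
  have h_ik : F s(i, j) = F s(i, k) := by
    rw [Sym2.eq_swap] at hne ⊢
    exact hF.eq_of_nonempty hij.symm hik hjk hne
      (hne.imp fun X hX ↦ hF.mem_of_nonempty hij hjk hik (Sym2.eq_swap ▸ hX) hne')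
  have superset {X Y : Set ι} (hX : X ∈ F s(i, j)) (hXY : X ⊆ Y) : Y ∈ F s(i, j) :=
    h_ik ▸ hF.mem_of_subset hij hjk hik hX (h_jk ▸ hX) hXY
  have inter {X Y : Set ι} (hX : X ∈ F s(i, j)) (hY : Y ∈ F s(i, j)) : X ∩ Y ∈ F s(i, j) :=
    h_ik ▸ hF.inter_mem hij hjk hik hX (h_jk ▸ hY)
  exact ⟨⟨F s(i, j), superset hne.some_mem (Set.subset_univ _), superset, inter⟩, rfl⟩

/-- The equivalence relation of the theorem: distinct vertices are related when the function on
the edge joining them is not constantly `0`. -/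
def supportSetoid (hF : IsEquivPolymorphism F) : Setoid V where
  r i j := i ≠ j → (F s(i, j)).Nonempty
  iseqv :=
    { refl := fun _ h ↦ absurd rfl h
      symm := fun h hne ↦ Sym2.eq_swap ▸ h hne.symm
      trans := by
        intro i j k hij hjk hik
        rcases eq_or_ne i j with rfl | hij'
        · exact hjk hik
        rcases eq_or_ne j k with rfl | hjk'
        · exact hij hik
        obtain ⟨X, hX⟩ := hij hij'
        obtain ⟨Y, hY⟩ := hjk hjk'
        exact ⟨X ∩ Y, hF.inter_mem hij' hjk' hik hX hY⟩ }

theorem eq_of_supportSetoid_of_common_vertex (hF : IsEquivPolymorphism F)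
    (hij : i ≠ j) (hjk : j ≠ k) (h : hF.supportSetoid i j) (h' : hF.supportSetoid j k) :
    F s(i, j) = F s(j, k) := by
  rcases eq_or_ne i k with rfl | hik
  · rw [Sym2.eq_swap]
  · exact hF.eq_of_nonempty hij hjk hik (h hij) (h' hjk)

theorem eq_of_supportSetoid (hF : IsEquivPolymorphism F) (hij : i ≠ j) (hkl : k ≠ l)
    (h_ij : hF.supportSetoid i j) (h_jk : hF.supportSetoid j k) (h_kl : hF.supportSetoid k l) :
    F s(i, j) = F s(k, l) := by
  rcases eq_or_ne j k with rfl | hjk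
  · exact hF.eq_of_supportSetoid_of_common_vertex hij hkl h_ij h_kl
  · exact (hF.eq_of_supportSetoid_of_common_vertex hij hjk h_ij h_jk).trans
      (hF.eq_of_supportSetoid_of_common_vertex hjk hkl h_jk h_kl)

end IsEquivPolymorphism

theorem stmt14_general (hF : IsEquivPolymorphism F) :
    ∃ R : Setoid V, (∀ i j, ¬ R i j → F s(i, j) = ∅) ∧
      ∀ a, 3 ≤ {b | R a b}.encard →
        ∃ l : Filter ι, ∀ i j, i ≠ j → R a i → R a j → F s(i, j) = l.sets := by
  refine ⟨hF.supportSetoid, fun i j h ↦ ?_, fun a ha ↦ ?_⟩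
  · exact Set.not_nonempty_iff_eq_empty.mp fun hne ↦ h fun _ ↦ hne
  · obtain ⟨T, hT, hT3⟩ := Set.exists_subset_encard_eq ha
    obtain ⟨u, v, w, huv, huw, hvw, rfl⟩ := Set.encard_eq_three.mp hT3
    have hau : hF.supportSetoid a u := hT (by simp)
    have hav : hF.supportSetoid a v := hT (by simp)
    have haw : hF.supportSetoid a w := hT (by simp)
    have rel {b c : V} (hb : hF.supportSetoid a b) (hc : hF.supportSetoid a c) :
        hF.supportSetoid b c := hF.supportSetoid.trans (hF.supportSetoid.symm hb) hc
    obtain ⟨l, hl⟩ := hF.exists_filter_sets_eq huv hvw huw (rel hau hav huv) (rel hav haw hvw)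
    exact ⟨l, fun i j hij hi hj ↦
      (hF.eq_of_supportSetoid hij huv (rel hi hj) (rel hj hau) (rel hau hav)).trans hl.symm⟩

end Polymorphism

section Encoding

variable {m p : ℕ}

/-- The unordered pair that an index in `PairIdx m` stands for. -/
def PairIdx.edge (e : PairIdx m) : Sym2 (Fin m) := s(e.val.1, e.val.2)

theorem PairIdx.edge_injective : Function.Injective (PairIdx.edge (m := m)) := by
  rintro ⟨⟨i, j⟩, hij⟩ ⟨⟨k, l⟩, hkl⟩ h
  rcases Sym2.eq_iff.mp h with ⟨rfl, rfl⟩ | ⟨rfl, rfl⟩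
  · rfl
  · exact absurd hkl hij.not_gt

theorem exists_edge_eq {i j : Fin m} (hij : i ≠ j) : ∃ e : PairIdx m, e.edge = s(i, j) := by
  rcases hij.lt_or_gt with h | h
  · exact ⟨⟨(i, j), h⟩, rfl⟩
  · exact ⟨⟨(j, i), h⟩, Sym2.eq_swap⟩

theorem pget_eq_of_edge_eq (x : PairIdx m → Bool) {e : PairIdx m} {i j : Fin m}
    (h : e.edge = s(i, j)) : pget x i j = x e := by
  obtain ⟨⟨a, b⟩, hab⟩ := e
  rcases Sym2.eq_iff.mp h with ⟨rfl, rfl⟩ | ⟨rfl, rfl⟩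
  · exact dif_pos hab
  · exact (dif_neg hab.not_gt).trans (dif_pos hab)

theorem rel_iff_of_edge_eq (r : Setoid (Fin m)) {e : PairIdx m} {i j : Fin m}
    (h : e.edge = s(i, j)) : r e.val.1 e.val.2 ↔ r i j := by
  rcases Sym2.eq_iff.mp h with ⟨hi, hj⟩ | ⟨hj, hi⟩
  · rw [hi, hj]
  · rw [hi, hj, r.comm']

theorem pget_boolIndicator_iff (r : Fin p → Setoid (Fin m)) (t : Fin p) {i j : Fin m}
    (hij : i ≠ j) :
    pget (fun e ↦ {t | r t e.val.1 e.val.2}.boolIndicator t) i j = true ↔ r t i j := by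
  obtain ⟨e, he⟩ := exists_edge_eq hij
  rw [pget_eq_of_edge_eq _ he, ← Set.mem_iff_boolIndicator]
  exact rel_iff_of_edge_eq (r t) he

theorem isEquivVec_boolIndicator (r : Fin p → Setoid (Fin m)) (t : Fin p) :
    IsEquivVec fun e ↦ {t | r t e.val.1 e.val.2}.boolIndicator t := by
  intro i j k hij hjk hik
  rw [pget_boolIndicator_iff r t hij, pget_boolIndicator_iff r t hjk,
    pget_boolIndicator_iff r t hik]
  exact (r t).trans

/-- The family of functions `f` in the encoding of `IsEquivPolymorphism`: at each edge, the sets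
of coordinates whose indicator vector is mapped to `true`. It is empty on the diagonal. -/
def acceptedSets (f : PairIdx m → (Fin p → Bool) → Bool) (e : Sym2 (Fin m)) :
    Set (Set (Fin p)) :=
  {X | ∃ q : PairIdx m, q.edge = e ∧ f q X.boolIndicator = true}

variable {f : PairIdx m → (Fin p → Bool) → Bool}

theorem mem_acceptedSets_edge (e : PairIdx m) (X : Set (Fin p)) :
    X ∈ acceptedSets f e.edge ↔ f e X.boolIndicator = true := by
  constructor
  · rintro ⟨q, hq, hX⟩
    rwa [← PairIdx.edge_injective hq]
  · exact fun hX ↦ ⟨e, rfl, hX⟩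

theorem setOf_mem_acceptedSets_edge (e : PairIdx m) (x : Fin p → Bool) :
    {t | x t = true} ∈ acceptedSets f e.edge ↔ f e x = true := by
  have boolIndicator_eq : {t | x t = true}.boolIndicator = x :=
    funext fun t ↦ Bool.eq_iff_iff.mpr (Set.mem_iff_boolIndicator _ t).symm
  rw [mem_acceptedSets_edge, boolIndicator_eq]

theorem pget_comp_boolIndicator_iff (r : Fin p → Setoid (Fin m)) {i j : Fin m} (hij : i ≠ j) :
    pget (fun e ↦ f e {t | r t e.val.1 e.val.2}.boolIndicator) i j = true ↔
      {t | r t i j} ∈ acceptedSets f s(i, j) := by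
  obtain ⟨e, he⟩ := exists_edge_eq hij
  rw [pget_eq_of_edge_eq _ he, ← he, mem_acceptedSets_edge]
  simp only [rel_iff_of_edge_eq _ he]

theorem isEquivPolymorphism_acceptedSets
    (hpoly : ∀ xs : Fin p → PairIdx m → Bool,
      (∀ k, IsEquivVec (xs k)) → IsEquivVec (fun e ↦ f e (fun k ↦ xs k e))) :
    IsEquivPolymorphism (acceptedSets f) := by
  intro r i j k hij hjk hik
  rw [← pget_comp_boolIndicator_iff r hij, ← pget_comp_boolIndicator_iff r hjk,
    ← pget_comp_boolIndicator_iff r hik]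
  exact hpoly _ (isEquivVec_boolIndicator r) i j k hij hjk hik

theorem eq_false_of_acceptedSets_eq_empty {e : PairIdx m} (h : acceptedSets f e.edge = ∅)
    (x : Fin p → Bool) : f e x = false := by
  rw [Bool.eq_false_iff, ne_eq, ← setOf_mem_acceptedSets_edge, h]
  exact Set.notMem_empty _

theorem exists_finset_eq_decide_of_filter (f : PairIdx m → (Fin p → Bool) → Bool)
    (l : Filter (Fin p)) :
    ∃ S : Finset (Fin p), ∀ e : PairIdx m, acceptedSets f e.edge = l.sets →
      ∀ x, f e x = decide (∀ s ∈ S, x s = true) := by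
  obtain ⟨S, rfl⟩ := l.eq_principal_of_finite
  refine ⟨S.toFinite.toFinset, fun e he x ↦ ?_⟩
  rw [Bool.eq_iff_iff, ← setOf_mem_acceptedSets_edge, he, Filter.mem_sets, Filter.mem_principal]
  simp only [Set.Finite.mem_toFinset, decide_eq_true_eq, Set.subset_def, Set.mem_ofPred_eq]

end Encoding

/-- structure of exact polymorphisms of `Equiv_m`. -/
theorem stmt14 (m p : ℕ) (hm : 3 ≤ m)
    (f : PairIdx m → (Fin p → Bool) → Bool)
    (hpoly : ∀ xs : Fin p → PairIdx m → Bool,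
      (∀ k, IsEquivVec (xs k)) → IsEquivVec (fun e => f e (fun k => xs k e))) :
    ∃ R : Fin m → Fin m → Prop, Equivalence R ∧
      (∀ e : PairIdx m, ¬ R e.val.1 e.val.2 → ∀ x, f e x = false) ∧
      (∀ a : Fin m, 3 ≤ Set.ncard {b | R a b} →
        ∃ S : Finset (Fin p), ∀ e : PairIdx m, R a e.val.1 → R a e.val.2 →
          ∀ x : Fin p → Bool, f e x = decide (∀ s ∈ S, x s = true)) := by
  obtain ⟨R, hempty, hfilter⟩ := stmt14_general (isEquivPolymorphism_acceptedSets hpoly)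
  refine ⟨R, R.iseqv, fun e he ↦ eq_false_of_acceptedSets_eq_empty (hempty _ _ he), fun a ha ↦ ?_⟩
  obtain ⟨l, hl⟩ := hfilter a ((Nat.cast_le.mpr ha).trans (Set.ncard_le_encard _))
  obtain ⟨S, hS⟩ := exists_finset_eq_decide_of_filter f l
  exact ⟨S, fun e hi hj ↦ hS e (hl _ _ e.property.ne hi hj)⟩
end

section
/- Let m ≥ 3, let ∼ be any equivalence relation on [m], and let (f_{{i,j}})_{i<j}, with f_{{i,j}} : {0,1}^p → {0,1}, be functions satisfying: (a) if i ≁ j then f_{{i,j}} is the constant 0 function; and (b) for every equivalence class A of ∼ with |A| ≥ 3 there exists a set S_A ⊆ [p] such that f_{{i,j}}(x) = ⋀_{s ∈ S_A} x_s for all distinct i, j ∈ A and all x ∈ {0,1}^p (the functions f_{{i,j}} for classes {i,j} of size 2 being arbitrary). Then (f_{{i,j}})_{i<j} constitute a polymorphism of Equiv_m. -/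
/-!
If the output contains both edges `ij` and `jk`, then by (a) the vertices `i, j, k` lie in a common
class. That class has at least three elements, so by (b) all of its edges carry the same
conjunction, and a conjunction of transitive relations is transitive. A class of size two contains
no triangle, so its function is never constrained.
-/

section Relations

variable {V ι : Type*}

/-- Transitivity of a Boolean relation on triples of distinct points. This is the condition that
`IsEquivVec` imposes on a vector indexed by pairs, for relations that need not be symmetric and
on an arbitrary set of vertices; values on the diagonal are irrelevant. -/
def OffDiagTransitive (r : V → V → Bool) : Prop :=
  ∀ i j k : V, i ≠ j → j ≠ k → i ≠ k → r i j = true → r j k = true → r i k = true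

theorem three_le_encard_class {R : V → V → Prop} (hR : Equivalence R) {i j k : V}
    (hij : i ≠ j) (hjk : j ≠ k) (hik : i ≠ k) (Rij : R i j) (Rik : R i k) :
    3 ≤ {b | R i b}.encard := by
  have hsub : {i, j, k} ⊆ {b | R i b} := by
    rintro b (rfl | rfl | rfl)
    exacts [hR.refl b, Rij, Rik]
  have hcard : ({i, j, k} : Set V).encard = 3 :=
    Set.encard_eq_three.2 ⟨i, j, k, hij, hik, hjk, rfl⟩
  exact hcard ▸ Set.encard_le_encard hsub

theorem stmt15_general {R : V → V → Prop} (hR : Equivalence R)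
    {F : V → V → (ι → Bool) → Bool}
    (ha : ∀ i j, i ≠ j → ¬ R i j → ∀ y, F i j y = false)
    (hb : ∀ a, 3 ≤ {b | R a b}.encard →
      ∃ S : Set ι, ∀ i j, i ≠ j → R a i → R a j → ∀ y, F i j y = true ↔ ∀ s ∈ S, y s = true)
    {r : ι → V → V → Bool} (hr : ∀ s, OffDiagTransitive (r s)) :
    OffDiagTransitive fun i j => F i j fun s => r s i j := by
  intro i j k hij hjk hik Fij Fjk
  have rel_of_apply {i j y} (hij : i ≠ j) (h : F i j y = true) : R i j :=
    not_not.1 fun hn => Bool.false_ne_true ((ha i j hij hn y).symm.trans h)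
  have Rij : R i j := rel_of_apply hij Fij
  have Rik : R i k := hR.trans Rij (rel_of_apply hjk Fjk)
  obtain ⟨S, hS⟩ := hb i (three_le_encard_class hR hij hjk hik Rij Rik)
  have rij := (hS i j hij (hR.refl i) Rij _).1 Fij
  have rjk := (hS j k hjk Rij Rik _).1 Fjk
  exact (hS i k hik (hR.refl i) Rik _).2 fun s hs =>
    hr s i j k hij hjk hik (rij s hs) (rjk s hs)

end Relations

section Vectors

variable {m : ℕ} {ι : Type*}

theorem pget_eq_of_forall {x : PairIdx m → Bool} {b : Bool} {P : Fin m → Fin m → Prop}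
    (hP : ∀ i j, P i j → P j i) (h : ∀ e : PairIdx m, P e.val.1 e.val.2 → x e = b)
    {i j : Fin m} (hij : i ≠ j) (hPij : P i j) : pget x i j = b := by
  rcases hij.lt_or_gt with hlt | hgt
  · simpa only [pget, dif_pos hlt] using h ⟨(i, j), hlt⟩ hPij
  · simpa only [pget, dif_neg hgt.not_gt, dif_pos hgt] using h ⟨(j, i), hgt⟩ (hP i j hPij)

theorem pget_apply (f : PairIdx m → (ι → Bool) → Bool) (xs : ι → PairIdx m → Bool)
    (i j : Fin m) :
    pget (fun e => f e fun s => xs s e) i j =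
      pget (fun e => f e fun s => pget (xs s) i j) i j := by
  unfold pget
  split_ifs <;> rfl

theorem isEquivVec_apply_iff {f : PairIdx m → (ι → Bool) → Bool} {xs : ι → PairIdx m → Bool} :
    IsEquivVec (fun e => f e fun s => xs s e) ↔
      OffDiagTransitive fun i j => pget (fun e => f e fun s => pget (xs s) i j) i j := by
  simp only [IsEquivVec, OffDiagTransitive, pget_apply f xs]

theorem pget_eq_false_of_not_rel {f : PairIdx m → (ι → Bool) → Bool} {R : Fin m → Fin m → Prop}
    (hR : ∀ i j, R i j → R j i)
    (ha : ∀ e : PairIdx m, ¬ R e.val.1 e.val.2 → ∀ y, f e y = false)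
    (i j : Fin m) (hij : i ≠ j) (hn : ¬ R i j) (y : ι → Bool) :
    pget (fun e => f e y) i j = false :=
  pget_eq_of_forall (fun i j => mt (hR j i)) (fun e he => ha e he y) hij hn

-- The decidability argument is found by unification: for `ι = Fin p`, instance search yields a
-- quantification over all of `Fin p` rather than over `S`.
theorem exists_pget_eq_true_iff
    {_ : ∀ (S : Finset ι) (y : ι → Bool), Decidable (∀ s ∈ S, y s = true)}
    {f : PairIdx m → (ι → Bool) → Bool} {A : Set (Fin m)}
    (hA : 3 ≤ A.ncard → ∃ S : Finset ι, ∀ e : PairIdx m, e.val.1 ∈ A → e.val.2 ∈ A →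
      ∀ y, f e y = decide (∀ s ∈ S, y s = true))
    (hcard : 3 ≤ A.encard) :
    ∃ S : Set ι, ∀ i j, i ≠ j → i ∈ A → j ∈ A →
      ∀ y, pget (fun e => f e y) i j = true ↔ ∀ s ∈ S, y s = true := by
  have hncard : 3 ≤ A.ncard := by
    rw [← A.toFinite.cast_ncard_eq] at hcard
    exact_mod_cast hcard
  obtain ⟨S, hS⟩ := hA hncard
  refine ⟨S, fun i j hij hi hj y => ?_⟩
  have hpget : pget (fun e => f e y) i j = decide (∀ s ∈ S, y s = true) :=
    pget_eq_of_forall (P := fun i j => i ∈ A ∧ j ∈ A) (fun _ _ => And.symm)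
      (fun e he => hS e he.1 he.2 y) hij ⟨hi, hj⟩
  simp only [hpget, decide_eq_true_eq, Finset.mem_coe]

end Vectors

/-- conversely, every family of the form described in
Theorem `thm:equiv-polymorphisms` is a polymorphism of `Equiv_m`. -/
theorem stmt15 (m p : ℕ) (hm : 3 ≤ m)
    (f : PairIdx m → (Fin p → Bool) → Bool)
    (R : Fin m → Fin m → Prop) (hR : Equivalence R)
    (ha : ∀ e : PairIdx m, ¬ R e.val.1 e.val.2 → ∀ x, f e x = false)
    (hb : ∀ a : Fin m, 3 ≤ Set.ncard {b | R a b} →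
      ∃ S : Finset (Fin p), ∀ e : PairIdx m, R a e.val.1 → R a e.val.2 →
        ∀ x : Fin p → Bool, f e x = decide (∀ s ∈ S, x s = true)) :
    ∀ xs : Fin p → PairIdx m → Bool,
      (∀ k, IsEquivVec (xs k)) → IsEquivVec (fun e => f e (fun k => xs k e)) :=
  fun _ hxs => isEquivVec_apply_iff.2 <|
    stmt15_general hR (pget_eq_false_of_not_rel (fun _ _ => hR.symm) ha)
      (fun a => exists_pget_eq_true_iff (hb a)) hxs
end

section
/- If f_{{1,2}}, f_{{1,3}}, f_{{2,3}} : {0,1}^p → {0,1} constitute a polymorphism of Equiv_3, then either there exists a set S ⊆ [p] such that f_{{1,2}}(x) = f_{{1,3}}(x) = f_{{2,3}}(x) = ⋀_{s ∈ S} x_s for all x ∈ {0,1}^p, or at least two of the three functions f_{{1,2}}, f_{{1,3}}, f_{{2,3}} are the constant 0 function. -/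
/-- The predicate `Equiv_3 ⊆ {0,1}³`, with coordinates indexed by the pairs
`{1,2}, {1,3}, {2,3}`: transitivity in every order (equivalently, the Hamming
weight is not exactly two). -/
def IsEquiv3 (a b c : Bool) : Prop :=
  (a = true → b = true → c = true) ∧
  (a = true → c = true → b = true) ∧
  (b = true → c = true → a = true)

/-!
Order `{0,1}^p` pointwise: a triple of vectors lies coordinatewise in `Equiv_3` exactly when the
meet of any two of them is below the third. Applying a polymorphism `(f, g, h)` to the triples
`(x, b, x ⊓ b)` and to the triples in which two entries agree and lie below the third shows that,
if `f x = 1` and `g b = 1`, then all three functions are `1` at `x ⊓ b`, and hence at `x`. So as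
soon as two of the functions are nonzero, all three are, and they are the indicator of one and the
same filter. In `{0,1}^p` every filter is principal, and the indicator of the up-set of `w` is the
conjunction over the support of `w`.
-/

open Order

theorem exists_eq_principal_of_wellFoundedLT {P : Type*} [Preorder P] [WellFoundedLT P]
    (F : PFilter P) : ∃ w, F = PFilter.principal w := by
  obtain ⟨w, hw⟩ := exists_minimal_of_wellFoundedLT (· ∈ F) F.nonempty
  have hleast : IsLeast (F : Set P) w := F.directed.minimal_iff_isLeast.mp hw
  exact ⟨w, le_antisymm (fun _ hx => hleast.2 hx) (PFilter.principal_le_iff.mpr hleast.1)⟩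

theorem exists_finset_mem_pFilter_iff {ι : Type*} [Finite ι] (F : PFilter (ι → Bool)) :
    ∃ S : Finset ι, ∀ x, x ∈ F ↔ ∀ s ∈ S, x s = true := by
  obtain ⟨w, rfl⟩ := exists_eq_principal_of_wellFoundedLT F
  refine ⟨(Set.toFinite {s | w s = true}).toFinset, fun x => ?_⟩
  simp only [PFilter.mem_principal, Pi.le_def, Bool.le_iff_imp, Set.Finite.mem_toFinset,
    Set.mem_ofPred_eq]

namespace IsEquiv3

variable {a b c : Bool}

theorem swap (h : IsEquiv3 a b c) : IsEquiv3 b a c :=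
  ⟨fun hb ha => h.1 ha hb, h.2.2, h.2.1⟩

theorem rotate (h : IsEquiv3 a b c) : IsEquiv3 b c a :=
  ⟨h.2.2, fun hb ha => h.1 ha hb, fun hc ha => h.2.1 ha hc⟩

theorem iff_inf_le : IsEquiv3 a b c ↔ a ⊓ b ≤ c ∧ a ⊓ c ≤ b ∧ b ⊓ c ≤ a := by
  revert a b c
  unfold IsEquiv3
  decide

end IsEquiv3

/-- Polymorphisms of `Equiv_3` with the cube `{0,1}^p` replaced by a meet-semilattice `L`: the
triples in `L` on which the functions are tested are those in which the meet of any two entries is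
below the third, which for `L = {0,1}^p` are the triples lying coordinatewise in `Equiv_3`. -/
def IsEquiv3Polymorphism {L : Type*} [SemilatticeInf L] (f g h : L → Bool) : Prop :=
  ∀ ⦃x y z : L⦄, x ⊓ y ≤ z → x ⊓ z ≤ y → y ⊓ z ≤ x → IsEquiv3 (f x) (g y) (h z)

namespace IsEquiv3Polymorphism

theorem pi_iff {ι : Type*} {f g h : (ι → Bool) → Bool} :
    IsEquiv3Polymorphism f g h ↔
      ∀ x y z : ι → Bool, (∀ k, IsEquiv3 (x k) (y k) (z k)) → IsEquiv3 (f x) (g y) (h z) := by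
  simp only [IsEquiv3Polymorphism, IsEquiv3.iff_inf_le, forall_and, and_imp,
    Pi.le_def, Pi.inf_apply]

variable {L : Type*} [SemilatticeInf L] {f g h : L → Bool} {x y : L}

theorem swap (H : IsEquiv3Polymorphism f g h) : IsEquiv3Polymorphism g f h :=
  fun _ _ _ hxy hxz hyz => (H (inf_comm _ _ |>.trans_le hxy) hyz hxz).swap

theorem rotate (H : IsEquiv3Polymorphism f g h) : IsEquiv3Polymorphism g h f :=
  fun _ _ _ hxy hxz hyz =>
    (H (inf_comm _ _ |>.trans_le hxz) (inf_comm _ _ |>.trans_le hyz) hxy).rotate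

theorem apply_inf (H : IsEquiv3Polymorphism f g h) (x y : L) :
    IsEquiv3 (f x) (g y) (h (x ⊓ y)) :=
  H le_rfl (inf_le_right.trans inf_le_right) (inf_le_right.trans inf_le_left)

theorem apply_of_le (H : IsEquiv3Polymorphism f g h) (hxy : x ≤ y) :
    IsEquiv3 (f y) (g x) (h x) :=
  H inf_le_right inf_le_right (inf_le_left.trans hxy)

theorem inf_eq_true (H : IsEquiv3Polymorphism f g h) (hx : f x = true) (hy : g y = true) :
    f (x ⊓ y) = true ∧ g (x ⊓ y) = true ∧ h (x ⊓ y) = true := by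
  have hh : h (x ⊓ y) = true := (H.apply_inf x y).1 hx hy
  exact ⟨(H.swap.apply_of_le inf_le_right).2.1 hy hh, (H.apply_of_le inf_le_left).2.1 hx hh, hh⟩

theorem eq_true_of_exists (H : IsEquiv3Polymorphism f g h) (hg : ∃ y, g y = true)
    (hx : f x = true) : g x = true := by
  obtain ⟨y, hy⟩ := hg
  obtain ⟨hf, -, hh⟩ := H.inf_eq_true hx hy
  exact (H.swap.apply_of_le inf_le_left).2.2 hf hh

theorem eq_of_exists (H : IsEquiv3Polymorphism f g h) (hf : ∃ x, f x = true)
    (hg : ∃ x, g x = true) : f = g :=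
  funext fun _ => Bool.eq_iff_iff.mpr ⟨H.eq_true_of_exists hg, H.swap.eq_true_of_exists hf⟩

theorem exists_eq_true (H : IsEquiv3Polymorphism f g h) (hf : ∃ x, f x = true)
    (hg : ∃ x, g x = true) : ∃ x, h x = true := by
  obtain ⟨x, hx⟩ := hf
  obtain ⟨y, hy⟩ := hg
  exact ⟨x ⊓ y, (H.inf_eq_true hx hy).2.2⟩

theorem isPFilter (H : IsEquiv3Polymorphism f f f) (hf : ∃ x, f x = true) :
    IsPFilter {x | f x = true} :=
  .of_def hf
    (fun x hx y hy => ⟨x ⊓ y, (H.inf_eq_true hx hy).1, inf_le_left, inf_le_right⟩)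
    fun hxy hx => (H.apply_of_le hxy).2.2 hx hx

theorem exists_eq_true_or_two_eq_false (H : IsEquiv3Polymorphism f g h) :
    ((∃ x, f x = true) ∧ (∃ x, g x = true) ∧ (∃ x, h x = true)) ∨
    ((∀ x, f x = false) ∧ (∀ x, g x = false)) ∨
    ((∀ x, f x = false) ∧ (∀ x, h x = false)) ∨
    ((∀ x, g x = false) ∧ (∀ x, h x = false)) := by
  have hfg := H.exists_eq_true
  have hgh := H.rotate.exists_eq_true
  have hhf := H.rotate.rotate.exists_eq_true
  simp only [← Bool.not_eq_true, ← not_exists]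
  tauto

end IsEquiv3Polymorphism

theorem stmt16_general {L : Type*} [SemilatticeInf L] {f g h : L → Bool}
    (H : IsEquiv3Polymorphism f g h) :
    (∃ F : PFilter L, ∀ x,
      (f x = true ↔ x ∈ F) ∧ (g x = true ↔ x ∈ F) ∧ (h x = true ↔ x ∈ F)) ∨
    ((∀ x, f x = false) ∧ (∀ x, g x = false)) ∨
    ((∀ x, f x = false) ∧ (∀ x, h x = false)) ∨
    ((∀ x, g x = false) ∧ (∀ x, h x = false)) := by
  refine H.exists_eq_true_or_two_eq_false.imp_left fun ⟨hf, hg, hh⟩ => ?_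
  obtain rfl := H.eq_of_exists hf hg
  obtain rfl := H.rotate.eq_of_exists hg hh
  exact ⟨(H.isPFilter hf).toPFilter, fun _ => ⟨.rfl, .rfl, .rfl⟩⟩

/-- every polymorphism of `Equiv_3` is either a common AND over a set of
coordinates, or has at least two of its three component functions constant `0`. -/
theorem stmt16 (p : ℕ)
    (f12 f13 f23 : (Fin p → Bool) → Bool)
    (hpoly : ∀ x y z : Fin p → Bool,
      (∀ k, IsEquiv3 (x k) (y k) (z k)) → IsEquiv3 (f12 x) (f13 y) (f23 z)) :
    (∃ S : Finset (Fin p), ∀ x : Fin p → Bool,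
      f12 x = decide (∀ s ∈ S, x s = true) ∧
      f13 x = decide (∀ s ∈ S, x s = true) ∧
      f23 x = decide (∀ s ∈ S, x s = true)) ∨
    ((∀ x, f12 x = false) ∧ (∀ x, f13 x = false)) ∨
    ((∀ x, f12 x = false) ∧ (∀ x, f23 x = false)) ∨
    ((∀ x, f13 x = false) ∧ (∀ x, f23 x = false)) := by
  refine (stmt16_general (IsEquiv3Polymorphism.pi_iff.mpr hpoly)).imp_left fun ⟨F, hF⟩ => ?_
  exact (exists_finset_mem_pFilter_iff F).imp fun S hS x => by grind
end
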